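/- Let X₁, X₂ be locally compact Polish metric spaces, C : X₁ × 𝒫(X₂) → (−∞,+∞] lower semi-continuous, bounded from below, with C(x₁,·) convex for every x₁, and let F₁, F₂ be superlinear admissible entropy functions such that F₂ has property (BM) on X₂. Define R_C φ(x₁) := inf_{p∈𝒫(X₂)} {C(x₁,p) + ∫_{X₂} φ dp} for x₁ ∈ X₁ and φ ∈ C_b(X₂). Then for every μ₁ ∈ ℳ(X₁), μ₂ ∈ ℳ(X₂): ℰ_C(μ₁,μ₂) = sup_{φ∈C_b(X₂)} [∫_{X₁} F₁°(R_C φ) dμ₁ + ∫_{X₂} F₂°(−φ) dμ₂]. -/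

import Mathlib

open MeasureTheory Filter Set Topology
open scoped ENNReal NNReal BoundedContinuousFunction

noncomputable section

/-- The "positive part" of an extended real number, as an element of `ℝ≥0∞`. -/
def posE (a : EReal) : ℝ≥0∞ := if a = ⊤ then ⊤ else ENNReal.ofReal a.toReal

/-- Integral of an `EReal`-valued function: positive part minus negative part
(in `EReal`, so that it is always defined). -/
def eIntegral {α : Type*} [MeasurableSpace α] (μ : Measure α) (f : α → EReal) : EReal :=
  ((∫⁻ x, posE (f x) ∂μ : ℝ≥0∞) : EReal) - ((∫⁻ x, posE (-(f x)) ∂μ : ℝ≥0∞) : EReal)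

/-- The recession constant `lim_{s→∞} G(s)/s` (as a `limsup`, which coincides with the
limit for convex functions). -/
def recessionOf (G : ℝ → ℝ≥0∞) : ℝ≥0∞ :=
  Filter.limsup (fun s : ℝ => G s / ENNReal.ofReal s) Filter.atTop

/-- An admissible entropy function: a convex, lower semicontinuous function
`F : [0,∞) → [0,∞]` which is finite at some positive point. -/
structure EntropyFn where
  F : ℝ → ℝ≥0∞
  convex' : ∀ a ∈ Ici (0:ℝ), ∀ b ∈ Ici (0:ℝ), ∀ t : ℝ, 0 ≤ t → t ≤ 1 →
    F (t * a + (1 - t) * b) ≤ ENNReal.ofReal t * F a + ENNReal.ofReal (1 - t) * F b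
  lsc : LowerSemicontinuousOn F (Ici (0:ℝ))
  dom : ∃ s : ℝ, 0 < s ∧ F s ≠ ∞

namespace EntropyFn

/-- The recession constant `F'_∞ = lim_{s→∞} F(s)/s`. -/
def recC (F : EntropyFn) : ℝ≥0∞ := recessionOf F.F

/-- `F` is superlinear if `F'_∞ = ∞`. -/
def Superlinear (F : EntropyFn) : Prop := F.recC = ∞

/-- `F°(φ) := inf_{s ≥ 0} (φ·s + F(s))`, extended to `EReal` arguments. -/
def circ (F : EntropyFn) (φ : EReal) : EReal :=
  ⨅ s : Ici (0:ℝ), φ * ((s : ℝ) : EReal) + ((F.F (s : ℝ) : ℝ≥0∞) : EReal)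

/-- The (interior of the) domain of `F°` is taken inside the set where `F°` is not `-∞`. -/
def circDom (F : EntropyFn) : Set ℝ := {φ : ℝ | F.circ (φ : EReal) ≠ ⊥}

/-- The reverse entropy function `R(r) = r·F(1/r)` for `r > 0`, with `R(0) = F'_∞`. -/
def revF (F : EntropyFn) (r : ℝ) : ℝ≥0∞ :=
  if 0 < r then ENNReal.ofReal r * F.F (1 / r) else F.recC

/-- The Legendre conjugate `R*(ψ) = sup_{s ≥ 0} (s·ψ − R(s))` of the reverse function. -/
def revConj (F : EntropyFn) (ψ : ℝ) : EReal :=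
  ⨆ s : Ici (0:ℝ), (((s : ℝ) * ψ : ℝ) : EReal) - ((F.revF (s : ℝ) : ℝ≥0∞) : EReal)

end EntropyFn

/-- The entropy functional `ℱ(γ|μ) = ∫ F(dγ/dμ) dμ + F'_∞ · γ^⊥(X)`, where
`γ = (dγ/dμ)·μ + γ^⊥` is the Lebesgue decomposition of `γ` with respect to `μ`. -/
def entF {X : Type*} [MeasurableSpace X] (F : EntropyFn) (γ μ : Measure X) : ℝ≥0∞ :=
  (∫⁻ x, F.F ((γ.rnDeriv μ x).toReal) ∂μ) + F.recC * (γ.singularPart μ) Set.univ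

/-- The reverse entropy functional `ℛ(μ|γ) = ∫ R(dμ/dγ) dγ + R'_∞ · μ^⊥(X)`. -/
def revEntF {X : Type*} [MeasurableSpace X] (F : EntropyFn) (μ γ : Measure X) : ℝ≥0∞ :=
  (∫⁻ x, F.revF ((μ.rnDeriv γ x).toReal) ∂γ) + recessionOf F.revF * (μ.singularPart γ) Set.univ

section WOET

variable {X₁ X₂ : Type*} [MeasurableSpace X₁] [MeasurableSpace X₂]

/-- The weak entropy-transport cost
`ℰ_C(γ|μ₁,μ₂) = ℱ₁(γ₁|μ₁) + ℱ₂(γ₂|μ₂) + ∫ C(x₁, γ_{x₁}) dγ₁(x₁)`. -/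
def wCost [StandardBorelSpace X₂] [Nonempty X₂]
    (C : X₁ → ProbabilityMeasure X₂ → EReal) (F₁ F₂ : EntropyFn)
    (μ₁ : Measure X₁) (μ₂ : Measure X₂)
    (γ : Measure (X₁ × X₂)) (hγ : IsFiniteMeasure γ) : EReal :=
  haveI := hγ
  ((entF F₁ γ.fst μ₁ : ℝ≥0∞) : EReal) + ((entF F₂ γ.snd μ₂ : ℝ≥0∞) : EReal) +
    eIntegral γ.fst (fun x₁ => C x₁ ⟨γ.condKernel x₁, inferInstance⟩)

/-- The weak optimal entropy-transport value `ℰ_C(μ₁,μ₂)`. -/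
def wOpt [StandardBorelSpace X₂] [Nonempty X₂]
    (C : X₁ → ProbabilityMeasure X₂ → EReal) (F₁ F₂ : EntropyFn)
    (μ₁ : Measure X₁) (μ₂ : Measure X₂) : EReal :=
  sInf { e : EReal | ∃ (γ : Measure (X₁ × X₂)) (hγ : IsFiniteMeasure γ),
    e = wCost C F₁ F₂ μ₁ μ₂ γ hγ }

variable [TopologicalSpace X₁] [TopologicalSpace X₂]

/-- The dual feasible set `Λ`. -/
def lamSet (C : X₁ → ProbabilityMeasure X₂ → EReal) (F₁ F₂ : EntropyFn) :
    Set ((X₁ →ᵇ ℝ) × (X₂ →ᵇ ℝ)) :=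
  { φ | (∀ x, φ.1 x ∈ interior F₁.circDom) ∧ (∀ x, φ.2 x ∈ interior F₂.circDom) ∧
      ∀ (x₁ : X₁) (p : ProbabilityMeasure X₂),
        ((φ.1 x₁ + ∫ x₂, φ.2 x₂ ∂(p : Measure X₂) : ℝ) : EReal) ≤ C x₁ p }

/-- The dual feasible set `Λ_R`. -/
def lamRSet (C : X₁ → ProbabilityMeasure X₂ → EReal) (F₁ F₂ : EntropyFn) :
    Set ((X₁ →ᵇ ℝ) × (X₂ →ᵇ ℝ)) :=
  { φ | (∃ b : ℝ, ((b : ℝ) : EReal) < ((F₁.F 0 : ℝ≥0∞) : EReal) ∧ ∀ x, φ.1 x ≤ b) ∧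
        (∃ b : ℝ, ((b : ℝ) : EReal) < ((F₂.F 0 : ℝ≥0∞) : EReal) ∧ ∀ x, φ.2 x ≤ b) ∧
        ∀ (x₁ : X₁) (p : ProbabilityMeasure X₂),
          F₁.revConj (φ.1 x₁) + eIntegral (p : Measure X₂) (fun x₂ => F₂.revConj (φ.2 x₂))
            ≤ C x₁ p }

/-- The dual feasible set `Λ_ET` (constraints tested against all pairs of nonnegative finite
measures; on all other signed measures `ET = +∞`, so those constraints are vacuous). -/
def lamETSet [StandardBorelSpace X₂] [Nonempty X₂]
    (C : X₁ → ProbabilityMeasure X₂ → EReal) (F₁ F₂ : EntropyFn) :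
    Set ((X₁ →ᵇ ℝ) × (X₂ →ᵇ ℝ)) :=
  { φ | ∀ (μ₁ : Measure X₁) (μ₂ : Measure X₂), IsFiniteMeasure μ₁ → IsFiniteMeasure μ₂ →
      (((∫ x, φ.1 x ∂μ₁) + ∫ x, φ.2 x ∂μ₂ : ℝ) : EReal) ≤ wOpt C F₁ F₂ μ₁ μ₂ }

/-- The set `Λ_ET^<`. -/
def lamETltSet [StandardBorelSpace X₂] [Nonempty X₂]
    (C : X₁ → ProbabilityMeasure X₂ → EReal) (F₁ F₂ : EntropyFn) :
    Set ((X₁ →ᵇ ℝ) × (X₂ →ᵇ ℝ)) :=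
  { φ ∈ lamETSet C F₁ F₂ |
      (∃ b : ℝ, ((b : ℝ) : EReal) < ((F₁.F 0 : ℝ≥0∞) : EReal) ∧ ∀ x, φ.1 x ≤ b) ∧
      (∃ b : ℝ, ((b : ℝ) : EReal) < ((F₂.F 0 : ℝ≥0∞) : EReal) ∧ ∀ x, φ.2 x ≤ b) }

/-- `R_C φ(x₁) := inf_{p ∈ 𝒫(X₂)} (C(x₁,p) + ∫ φ dp)`. -/
def RCfun (C : X₁ → ProbabilityMeasure X₂ → EReal) (φ : X₂ →ᵇ ℝ) (x₁ : X₁) : EReal :=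
  ⨅ p : ProbabilityMeasure X₂, C x₁ p + ((∫ x₂, φ x₂ ∂(p : Measure X₂) : ℝ) : EReal)

/-- Property (BM) of an admissible entropy function on a space `X`. -/
def HasBM (X : Type*) [TopologicalSpace X] [MeasurableSpace X] (F : EntropyFn) : Prop :=
  ∀ ψ : X →ᵇ ℝ, (∃ b : ℝ, ((b : ℝ) : EReal) < ((F.F 0 : ℝ≥0∞) : EReal) ∧ ∀ x, ψ x ≤ b) →
    ∃ s : X → ℝ, Measurable s ∧ (∃ M : ℝ, ∀ x, |s x| ≤ M) ∧ (∀ x, 0 < s x) ∧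
      ∀ x, ((F.revF (s x) : ℝ≥0∞) : EReal) + F.revConj (ψ x) = ((s x * ψ x : ℝ) : EReal)

end WOET

/-- The functional `ET` extended to pairs of finite signed measures:
it equals `ℰ_C(μ₁,μ₂)` when both arguments are (induced by) nonnegative finite measures,
and `+∞` otherwise. -/
def ETsgn {X₁ X₂ : Type*} [MeasurableSpace X₁] [MeasurableSpace X₂]
    [StandardBorelSpace X₂] [Nonempty X₂]
    (C : X₁ → ProbabilityMeasure X₂ → EReal) (F₁ F₂ : EntropyFn)
    (ν₁ : SignedMeasure X₁) (ν₂ : SignedMeasure X₂) : EReal :=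
  sInf { e : EReal | ∃ (μ₁ : Measure X₁) (h₁ : IsFiniteMeasure μ₁)
      (μ₂ : Measure X₂) (h₂ : IsFiniteMeasure μ₂),
      ν₁ = @Measure.toSignedMeasure X₁ _ μ₁ h₁ ∧ ν₂ = @Measure.toSignedMeasure X₂ _ μ₂ h₂ ∧
      e = wOpt C F₁ F₂ μ₁ μ₂ }

section Martingale

variable {X : Set ℝ}

/-- The martingale condition for a finite measure on `X × X`:
`∫ y dγ_x(y) = x` for `γ₁`-a.e. `x`. -/
def martCond [StandardBorelSpace ↥X] [Nonempty ↥X]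
    (γ : Measure (↥X × ↥X)) (hγ : IsFiniteMeasure γ) : Prop :=
  haveI := hγ
  ∀ᵐ x ∂γ.fst, (∫ y, (y : ℝ) ∂(γ.condKernel x)) = (x : ℝ)

/-- The martingale optimal entropy transport value `ℰ_M(μ₁,μ₂)` (with an `EReal`-valued
cost `c`). -/
def eMart [StandardBorelSpace ↥X] [Nonempty ↥X]
    (c : ↥X → ↥X → EReal) (F₁ F₂ : EntropyFn) (μ₁ μ₂ : Measure ↥X) : EReal :=
  sInf { e : EReal | ∃ (γ : Measure (↥X × ↥X)) (hγ : IsFiniteMeasure γ), martCond γ hγ ∧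
    e = ((entF F₁ γ.fst μ₁ : ℝ≥0∞) : EReal) + ((entF F₂ γ.snd μ₂ : ℝ≥0∞) : EReal) +
        eIntegral γ (fun q => c q.1 q.2) }

/-- The martingale optimal entropy transport value `ℰ_M(μ₁,μ₂)` (with a `[0,∞]`-valued
cost `c`). -/
def eMartNN [StandardBorelSpace ↥X] [Nonempty ↥X]
    (c : ↥X → ↥X → ℝ≥0∞) (F₁ F₂ : EntropyFn) (μ₁ μ₂ : Measure ↥X) : EReal :=
  sInf { e : EReal | ∃ (γ : Measure (↥X × ↥X)) (hγ : IsFiniteMeasure γ), martCond γ hγ ∧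
    e = ((entF F₁ γ.fst μ₁ + entF F₂ γ.snd μ₂ + ∫⁻ q, c q.1 q.2 ∂γ : ℝ≥0∞) : EReal) }

/-- The dual feasible set `Λ_M` for the martingale problem. -/
def lamM (c : ↥X → ↥X → EReal) (F₁ F₂ : EntropyFn) : Set ((↥X →ᵇ ℝ) × (↥X →ᵇ ℝ)) :=
  { φ | (∀ x, φ.1 x ∈ interior F₁.circDom) ∧ (∀ x, φ.2 x ∈ interior F₂.circDom) ∧
      ∃ h : ↥X →ᵇ ℝ, ∀ x₁ x₂ : ↥X,
        ((φ.1 x₁ + φ.2 x₂ + h x₁ * ((x₂ : ℝ) - (x₁ : ℝ)) : ℝ) : EReal) ≤ c x₁ x₂ }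

/-- The perspective function `r·F(θ/r)` with the convention `r·F(θ/r) = θ·F'_∞` for `r = 0`. -/
def perspFn (F : EntropyFn) (r θ : ℝ) : ℝ≥0∞ :=
  if r = 0 then ENNReal.ofReal θ * F.recC else ENNReal.ofReal r * F.F (θ / r)

/-- The homogeneous marginal perspective cost `H(x₁,r₁;x₂,r₂)` (the dependence on
`(x₁,x₂)` is through the value `c = c(x₁,x₂)`). -/
def Hcost (F₁ F₂ : EntropyFn) (c : ℝ≥0∞) (r₁ r₂ : ℝ) : ℝ≥0∞ :=
  if c ≠ ∞ then
    ⨅ θ : Ioi (0:ℝ), perspFn F₁ r₁ (θ : ℝ) + perspFn F₂ r₂ (θ : ℝ) + ENNReal.ofReal (θ : ℝ) * c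
  else F₁.F 0 * ENNReal.ofReal r₁ + F₂.F 0 * ENNReal.ofReal r₂

/-- The functional `ℋ(μ₁,μ₂|γ)`. -/
def hMargFun (F₁ F₂ : EntropyFn) (c : ↥X → ↥X → ℝ≥0∞) (μ₁ μ₂ : Measure ↥X)
    (γ : Measure (↥X × ↥X)) : ℝ≥0∞ :=
  (∫⁻ q, Hcost F₁ F₂ (c q.1 q.2) ((μ₁.rnDeriv γ.fst q.1).toReal)
      ((μ₂.rnDeriv γ.snd q.2).toReal) ∂γ)
    + F₁.F 0 * (μ₁.singularPart γ.fst) Set.univ + F₂.F 0 * (μ₂.singularPart γ.snd) Set.univ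

/-- The functional `ℛ(μ₁,μ₂|γ)`. -/
def rMargFun (F₁ F₂ : EntropyFn) (c : ↥X → ↥X → ℝ≥0∞) (μ₁ μ₂ : Measure ↥X)
    (γ : Measure (↥X × ↥X)) : ℝ≥0∞ :=
  revEntF F₁ μ₁ γ.fst + revEntF F₂ μ₂ γ.snd + ∫⁻ q, c q.1 q.2 ∂γ

/-- The first `p`-homogeneous marginal of a measure on `Y × Y`, `Y = X × [0,∞)`. -/
def hMarg1 (p : ℝ) (α : Measure ((↥X × ℝ≥0) × (↥X × ℝ≥0))) : Measure ↥X :=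
  Measure.map (fun q => q.1.1) (α.withDensity fun q => (q.1.2 : ℝ≥0∞) ^ p)

/-- The second `p`-homogeneous marginal of a measure on `Y × Y`, `Y = X × [0,∞)`. -/
def hMarg2 (p : ℝ) (α : Measure ((↥X × ℝ≥0) × (↥X × ℝ≥0))) : Measure ↥X :=
  Measure.map (fun q => q.2.1) (α.withDensity fun q => (q.2.2 : ℝ≥0∞) ^ p)

/-- Membership in the homogeneous constraint set `ℋ^p_{M,≤}(μ₁,μ₂)`. -/
def memHpM (p : ℝ) (μ₁ μ₂ : Measure ↥X) (α : Measure ((↥X × ℝ≥0) × (↥X × ℝ≥0))) : Prop :=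
  IsFiniteMeasure α ∧ (∫⁻ q, (q.1.2 : ℝ≥0∞) ^ p + (q.2.2 : ℝ≥0∞) ^ p ∂α) ≠ ∞ ∧
    hMarg1 p α ≤ μ₁ ∧ hMarg2 p α ≤ μ₂ ∧
    ∀ h : ↥X →ᵇ ℝ, (∫ q, h q.1.1 * ((q.2.1 : ℝ) - (q.1.1 : ℝ)) ∂α) = 0

end Martingale

/-!
Weak duality is the Fenchel–Young inequality, integrated.

For the converse, replace a plan `γ` by a measure `Λ` on `X₁ × 𝒫(X₂)` and each of the three terms of
the cost by its dual representation. The triples `(ν₁, ν₂, t)` such that some `Λ` attains a value at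
most `t` at `(ν₁, ν₂)` form a convex cone, which is closed because superlinearity makes the sets of
competitors tight; since `C` is convex in its second argument, averaging `Λ` over `𝒫(X₂)` gives back
a plan of value at most `t`. If `a < ℰ_C(μ₁, μ₂)`, then `(μ₁, μ₂, a)` lies outside this cone, and
separating it from the cone produces `ψ₁, ψ₂` with `∫ ψ₁ dμ₁ + ∫ ψ₂ dμ₂ > a` and
`∫ ψ₁ dν₁ + ∫ ψ₂ dν₂ ≤ t` on the cone.

It remains to find one `φ` with `F₂°(-φ) ≥ ψ₂ - ε` and `F₁°(R_C φ) ≥ ψ₁`. Take `φ(y)` to be the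
largest `m` with `-F₂°(-m) ≤ ε - ψ₂(y)`. As a function of the bound, this largest `m` is concave,
hence continuous, and its slope at `ε - ψ₂(y)` is a measurable density `σ(y)`. The second inequality
is then the separation inequality for `Λ = δ_{(x, p)}`, `ν₁ = θ⁻¹ δ_x` and `ν₂ = σ p`.
-/

/-! ### The weak topology on probability and finite measures -/

section ProbabilityMeasure

variable {Y : Type*} [TopologicalSpace Y] [MeasurableSpace Y] [BorelSpace Y]

lemma isInducing_probabilityMeasure_map {K : Type*} [TopologicalSpace K]
    [TopologicalSpace.MetrizableSpace K] [SecondCountableTopology K] [MeasurableSpace K]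
    [BorelSpace K] {e : Y → K} (he : IsInducing e) :
    IsInducing fun p : ProbabilityMeasure Y ↦ p.map he.continuous.measurable.aemeasurable := by
  let Φ := fun p : ProbabilityMeasure Y ↦ p.map he.continuous.measurable.aemeasurable
  refine isInducing_iff_nhds.2 fun p ↦ le_antisymm
    (map_le_iff_le_comap.1 (ProbabilityMeasure.continuous_map he.continuous).continuousAt) ?_
  refine tendsto_id'.1 (tendsto_of_forall_isOpen_le_liminf' fun G hG ↦ ?_)
  obtain ⟨U, hU, rfl⟩ := he.isOpen_iff.1 hG
  have h : Tendsto Φ (comap Φ (𝓝 (Φ p))) (𝓝 (Φ p)) := tendsto_comap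
  simpa only [Φ, ProbabilityMeasure.toMeasure_map, id_eq,
    Measure.map_apply he.continuous.measurable hU.measurableSet] using
    ProbabilityMeasure.le_liminf_measure_open_of_tendsto h hU

variable (Y) in
lemma probabilityMeasure_topology_eq_generateFrom :
    (inferInstance : TopologicalSpace (ProbabilityMeasure Y)) = .generateFrom
      {s | ∃ (f : Y →ᵇ ℝ) (V : Set ℝ), IsOpen V ∧
        s = (fun p : ProbabilityMeasure Y ↦ ∫ y, f y ∂(p : Measure Y)) ⁻¹' V} := by
  refine le_antisymm (le_generateFrom ?_) ?_
  · rintro _ ⟨f, V, hV, rfl⟩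
    exact hV.preimage (continuous_iff_continuousAt.2 fun p ↦
      ProbabilityMeasure.tendsto_iff_forall_integral_tendsto.1 tendsto_id f)
  · refine le_of_nhds_le_nhds fun p ↦
      ProbabilityMeasure.tendsto_iff_forall_integral_tendsto (μs := id).2 fun f V hV ↦ ?_
    obtain ⟨W, hWV, hW, hpW⟩ := mem_nhds_iff.1 hV
    exact mem_map.2 (mem_of_superset
      (@IsOpen.mem_nhds _ (.generateFrom _) p ((fun q ↦ ∫ y, f y ∂(q : Measure Y)) ⁻¹' W)
        (.basic _ ⟨f, W, hW, rfl⟩) hpW) (preimage_mono hWV))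

variable [TopologicalSpace.MetrizableSpace Y]

instance secondCountableTopology_probabilityMeasure [SecondCountableTopology Y] :
    SecondCountableTopology (ProbabilityMeasure Y) := by
  let := TopologicalSpace.metrizableSpaceMetric Y
  obtain ⟨e, he⟩ := Metric.PiNatEmbed.exists_embedding_to_hilbert_cube (X := Y)
  let := TopologicalSpace.pseudoMetrizableSpacePseudoMetric (ProbabilityMeasure (ℕ → unitInterval))
  exact (isInducing_probabilityMeasure_map he.isInducing).secondCountableTopology

lemma lowerSemicontinuous_probabilityMeasure_apply {U : Set Y} (hU : IsOpen U) :
    LowerSemicontinuous fun p : ProbabilityMeasure Y ↦ (p : Measure Y) U := fun _ ↦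
  lowerSemicontinuousAt_iff_le_liminf.2
    (ProbabilityMeasure.le_liminf_measure_open_of_tendsto tendsto_id hU)

instance borelSpace_probabilityMeasure [SecondCountableTopology Y] :
    BorelSpace (ProbabilityMeasure Y) := by
  refine ⟨le_antisymm ?_ ?_⟩
  · let : MeasurableSpace (ProbabilityMeasure Y) := borel _
    have : BorelSpace (ProbabilityMeasure Y) := ⟨rfl⟩
    exact (Measurable.measure_of_isPiSystem_of_isProbabilityMeasure
      (hgen := BorelSpace.measurable_eq.trans rfl) (hpi := isPiSystem_isOpen) fun s hs ↦
        (lowerSemicontinuous_probabilityMeasure_apply hs).measurable).comap_le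
  · rw [borel_eq_generateFrom_of_subbasis (probabilityMeasure_topology_eq_generateFrom Y)]
    refine MeasurableSpace.generateFrom_le ?_
    rintro _ ⟨f, V, hV, rfl⟩
    exact hV.measurableSet.preimage (f.continuous.stronglyMeasurable.integral_kernel
      (κ := ⟨_, measurable_subtype_coe⟩)).measurable

end ProbabilityMeasure

section StandardBorel

variable {X K : Type*} [MeasurableSpace X] [MeasurableSpace K]

lemma standardBorelSpace_of_measurableEmbedding [StandardBorelSpace K] {e : X → K}
    (he : MeasurableEmbedding e) : StandardBorelSpace X := by
  have := he.measurableSet_range.standardBorel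
  let := upgradeStandardBorel (range e)
  let f : X ≃ᵐ range e := he.equivRange
  let : TopologicalSpace X := .induced f.toEquiv inferInstance
  have : PolishSpace X := f.toEquiv.polishSpace_induced
  have : BorelSpace X := ⟨f.measurableEmbedding.comap_eq.symm.trans
    ((congrArg (MeasurableSpace.comap f) BorelSpace.measurable_eq).trans borel_comap.symm)⟩
  infer_instance

lemma range_probabilityMeasure_map {e : X → K} (he : MeasurableEmbedding e) :
    range (fun p : ProbabilityMeasure X ↦ p.map he.measurable.aemeasurable) =
      {q : ProbabilityMeasure K | (q : Measure K) (range e) = 1} := by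
  ext q
  constructor
  · rintro ⟨p, rfl⟩
    simp [he.map_apply]
  · intro hq
    refine ⟨⟨(q : Measure K).comap e, ⟨by rw [he.comap_apply, image_univ]; exact hq⟩⟩,
      Subtype.ext ?_⟩
    refine (he.map_comap _).trans (Measure.restrict_eq_self_of_ae_mem ?_)
    rw [ae_mem_iff_measure_eq he.measurableSet_range.nullMeasurableSet, measure_univ]
    exact hq

lemma measurableEmbedding_probabilityMeasure_map {e : X → K} (he : MeasurableEmbedding e) :
    MeasurableEmbedding
      fun p : ProbabilityMeasure X ↦ p.map he.measurable.aemeasurable := by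
  have hrange := range_probabilityMeasure_map he
  refine .of_measurable_inverse_on_range
    (g := fun q ↦ ⟨(q.1 : Measure K).comap e, ⟨by
      rw [he.comap_apply, image_univ]; exact hrange.subset q.2⟩⟩)
    ((Measure.measurable_map e he.measurable).comp measurable_subtype_coe).subtype_mk ?_ ?_ ?_
  · rw [hrange]
    exact (Measure.measurable_coe he.measurableSet_range).comp measurable_subtype_coe
      (measurableSet_singleton 1)
  · refine Measurable.subtype_mk (Measure.measurable_of_measurable_coe _ fun s hs ↦ ?_)
    simp only [he.comap_apply]
    exact (Measure.measurable_coe (he.measurableSet_image.2 hs)).comp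
      (measurable_subtype_coe.comp measurable_subtype_coe)
  · exact fun p ↦ Subtype.ext (he.comap_map _)

instance standardBorelSpace_probabilityMeasure [StandardBorelSpace X] :
    StandardBorelSpace (ProbabilityMeasure X) := by
  let := upgradeStandardBorel X
  let := TopologicalSpace.metrizableSpaceMetric X
  obtain ⟨e, he⟩ := Metric.PiNatEmbed.exists_embedding_to_hilbert_cube (X := X)
  have : PolishSpace (ProbabilityMeasure (ℕ → unitInterval)) := by
    let := TopologicalSpace.metrizableSpaceMetric (ProbabilityMeasure (ℕ → unitInterval))
    infer_instance
  exact standardBorelSpace_of_measurableEmbedding (measurableEmbedding_probabilityMeasure_map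
    (he.continuous.measurable.measurableEmbedding he.injective))

end StandardBorel

section FiniteMeasure

variable {Y : Type*} [TopologicalSpace Y] [MeasurableSpace Y]

lemma mass_add_finiteMeasure {Y : Type*} [MeasurableSpace Y] (μ ν : FiniteMeasure Y) :
    (μ + ν).mass = μ.mass + ν.mass := by
  simp [FiniteMeasure.mass]

lemma tendsto_add_const_finiteMeasure_iff [OpensMeasurableSpace Y] {ι : Type*} {l : Filter ι}
    {ν : ι → FiniteMeasure Y} {ν₀ δ : FiniteMeasure Y} :
    Tendsto (fun i ↦ ν i + δ) l (𝓝 (ν₀ + δ)) ↔ Tendsto ν l (𝓝 ν₀) := by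
  refine ⟨fun h ↦ ?_, fun h ↦ h.add_const δ⟩
  rw [FiniteMeasure.tendsto_iff_forall_integral_tendsto] at h ⊢
  intro f
  simpa only [FiniteMeasure.toMeasure_add, add_sub_cancel_right,
    integral_add_measure (f.integrable _) (f.integrable _)] using
    (h f).sub_const (∫ y, f y ∂(δ : Measure Y))

lemma isInducing_normalize_add_prodMk_mass [Nonempty Y] [OpensMeasurableSpace Y]
    {δ : FiniteMeasure Y} (hδ : δ ≠ 0) :
    IsInducing fun ν : FiniteMeasure Y ↦ ((ν + δ).normalize, ν.mass) := by
  let f := fun ν : FiniteMeasure Y ↦ ((ν + δ).normalize, ν.mass)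
  have hne (ν : FiniteMeasure Y) : ν + δ ≠ 0 := by
    rw [← FiniteMeasure.mass_nonzero_iff, mass_add_finiteMeasure]
    exact (add_pos_of_nonneg_of_pos zero_le
      (pos_iff_ne_zero.2 (δ.mass_nonzero_iff.2 hδ))).ne'
  refine isInducing_iff_nhds.2 fun ν ↦ le_antisymm (map_le_iff_le_comap.1 ?_) ?_
  · exact (FiniteMeasure.tendsto_normalize_of_tendsto
      (tendsto_add_const_finiteMeasure_iff.2 tendsto_id) (hne ν)).prodMk_nhds
        (FiniteMeasure.continuous_mass.tendsto ν)
  · have h : Tendsto f (comap f (𝓝 (f ν))) (𝓝 (f ν)) := tendsto_comap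
    refine tendsto_id'.1 (tendsto_add_const_finiteMeasure_iff (δ := δ).1 ?_)
    refine (FiniteMeasure.tendsto_normalize_iff_tendsto (hne ν)).1 ⟨h.fst_nhds, ?_⟩
    simpa only [mass_add_finiteMeasure, id_eq] using! h.snd_nhds.add_const δ.mass

instance firstCountableTopology_finiteMeasure [TopologicalSpace.MetrizableSpace Y]
    [SecondCountableTopology Y] [BorelSpace Y] : FirstCountableTopology (FiniteMeasure Y) := by
  rcases isEmpty_or_nonempty Y with hY | ⟨⟨y⟩⟩
  · have : Subsingleton (FiniteMeasure Y) := Subtype.val_injective.subsingleton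
    have : DiscreteTopology (FiniteMeasure Y) := Subsingleton.discreteTopology
    infer_instance
  · have hδ : (diracProba y).toFiniteMeasure ≠ 0 :=
      (diracProba y).toFiniteMeasure_nonzero
    have : Nonempty Y := ⟨y⟩
    exact (isInducing_normalize_add_prodMk_mass hδ).firstCountableTopology

end FiniteMeasure

/-! ### Tightness -/

section Tight

variable {Y : Type*} [TopologicalSpace Y] [MeasurableSpace Y] [BorelSpace Y]

lemma isTightMeasureSet_range_of_tendsto [PolishSpace Y] {ν : ℕ → FiniteMeasure Y}
    {ν₀ : FiniteMeasure Y} (hν : Tendsto ν atTop (𝓝 ν₀)) :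
    IsTightMeasureSet (range fun n ↦ (ν n : Measure Y)) := by
  let := TopologicalSpace.upgradeIsCompletelyMetrizable Y
  refine isTightMeasureSet_iff_exists_isCompact_measure_compl_le.2 fun ε hε ↦ ?_
  rcases isEmpty_or_nonempty Y with hY | ⟨⟨y⟩⟩
  · exact ⟨∅, isCompact_empty, by simp [Measure.eq_zero_of_isEmpty]⟩
  have : Nonempty Y := ⟨y⟩
  let δ := (diracProba y).toFiniteMeasure
  have hδ : δ ≠ 0 := (diracProba y).toFiniteMeasure_nonzero
  obtain ⟨B, hB⟩ := hν.mass.bddAbove_range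
  have hlim : Tendsto (fun n ↦ (ν n + δ).normalize) atTop (𝓝 (ν₀ + δ).normalize) :=
    (((isInducing_normalize_add_prodMk_mass hδ).continuous.tendsto ν₀).comp hν).fst_nhds
  have htight := isTightMeasureSet_of_isCompact_closure hlim.isCompact_insert_range.closure
  obtain ⟨K, hK, hle⟩ := isTightMeasureSet_iff_exists_isCompact_measure_compl_le.1 htight
    (ε / (B + δ.mass)) (ENNReal.div_pos hε.ne' (by simp))
  refine ⟨K, hK, ?_⟩
  rintro _ ⟨n, rfl⟩
  have hmass : (ν n + δ).mass ≤ B + δ.mass := by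
    rw [mass_add_finiteMeasure]
    gcongr
    exact hB ⟨n, rfl⟩
  calc (ν n : Measure Y) Kᶜ
      ≤ ((ν n + δ : FiniteMeasure Y) : Measure Y) Kᶜ := by simp
    _ = (ν n + δ).mass * ((ν n + δ).normalize : Measure Y) Kᶜ := by
        conv_lhs => rw [FiniteMeasure.self_eq_mass_smul_normalize (ν n + δ)]
        rfl
    _ ≤ (B + δ.mass : ℝ≥0) * (ε / (B + δ.mass)) := by
        gcongr
        exact hle _ ⟨_, mem_insert_of_mem _ ⟨n, rfl⟩, rfl⟩
    _ ≤ ε := by push_cast; exact ENNReal.mul_div_le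

lemma exists_subseq_tendsto_of_isTightMeasureSet [TopologicalSpace.MetrizableSpace Y]
    [SecondCountableTopology Y] {ν : ℕ → FiniteMeasure Y} {B : ℝ≥0} (hB : ∀ n, (ν n).mass ≤ B)
    (hν : IsTightMeasureSet (range fun n ↦ (ν n : Measure Y))) :
    ∃ (ν₀ : FiniteMeasure Y) (k : ℕ → ℕ), StrictMono k ∧ Tendsto (ν ∘ k) atTop (𝓝 ν₀) := by
  let u : ℕ → ℝ≥0 := fun n ↦ 2⁻¹ ^ n
  have hu : Tendsto u atTop (𝓝 0) := NNReal.tendsto_pow_atTop_nhds_zero_of_lt_one two_inv_lt_one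
  choose K hK hle using fun n ↦
    isTightMeasureSet_iff_exists_isCompact_measure_compl_le.1 hν (u n)
      (by simp [u])
  have hcompact := isCompact_setOfPred_finiteMeasure_mass_le_compl_isCompact_le B hu hK
    (.inl inferInstance)
  obtain ⟨ν₀, -, k, hk, hlim⟩ := hcompact.tendsto_subseq fun n ↦ ⟨hB n, fun m ↦ by
    simpa [← ENNReal.coe_le_coe] using hle m _ ⟨n, rfl⟩⟩
  exact ⟨ν₀, k, hk, hlim⟩

variable (Y) in
/-- The kernel `p ↦ p` from `𝒫(Y)` to `Y`; composing a measure `Λ` on `𝒫(Y)` with it gives the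
barycenter `∫ p dΛ(p)` of `Λ`. -/
def evalKernel : ProbabilityTheory.Kernel (ProbabilityMeasure Y) Y :=
  ⟨fun p ↦ p, measurable_subtype_coe⟩

instance : ProbabilityTheory.IsMarkovKernel (evalKernel Y) :=
  ⟨fun p ↦ p.2⟩

lemma isTightMeasureSet_of_isTightMeasureSet_barycenter [TopologicalSpace.MetrizableSpace Y]
    {S : Set (Measure (ProbabilityMeasure Y))}
    (hS : IsTightMeasureSet ((fun Λ ↦ Λ.bind (evalKernel Y)) '' S)) : IsTightMeasureSet S := by
  refine isTightMeasureSet_iff_exists_isCompact_measure_compl_le.2 fun ε hε ↦ ?_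
  obtain ⟨ε', hε', hsum⟩ := ENNReal.exists_pos_sum_of_countable hε.ne' ℕ
  let u : ℕ → ℝ≥0 := fun n ↦ 2⁻¹ ^ n
  have hu : Tendsto u atTop (𝓝 0) := NNReal.tendsto_pow_atTop_nhds_zero_of_lt_one two_inv_lt_one
  choose K hK hle using fun n ↦
    isTightMeasureSet_iff_exists_isCompact_measure_compl_le.1 hS (u n * ε' n)
      (by simpa [u] using hε' n)
  refine ⟨{p | ∀ n, p (K n)ᶜ ≤ u n},
    isCompact_setOfPred_probabilityMeasure_mass_eq_compl_isCompact_le hu hK (.inl ?_), ?_⟩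
  · let := TopologicalSpace.metrizableSpaceMetric Y
    infer_instance
  intro Λ hΛ
  have hmarkov (n : ℕ) : Λ {p | (u n : ℝ≥0∞) ≤ evalKernel Y p (K n)ᶜ} ≤ ε' n := by
    have hKn := (hK n).isClosed.measurableSet.compl
    have h := (mul_meas_ge_le_lintegral ((evalKernel Y).measurable_coe hKn) (u n)).trans
      ((Measure.bind_apply hKn (evalKernel Y).aemeasurable).symm.trans_le
        (hle n _ (mem_image_of_mem _ hΛ)))
    exact (ENNReal.mul_le_mul_iff_right (by simp [u]) (by simp)).1 h
  calc Λ {p | ∀ n, p (K n)ᶜ ≤ u n}ᶜ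
      ≤ Λ (⋃ n, {p | (u n : ℝ≥0∞) ≤ evalKernel Y p (K n)ᶜ}) := measure_mono fun p hp ↦ by
        obtain ⟨n, hn⟩ := not_forall.1 hp
        rw [not_le, ← ENNReal.coe_lt_coe, p.ennreal_coeFn_eq_coeFn_toMeasure] at hn
        exact mem_iUnion.2 ⟨n, hn.le⟩
    _ ≤ ∑' n, (ε' n : ℝ≥0∞) := (measure_iUnion_le _).trans (ENNReal.tsum_le_tsum hmarkov)
    _ ≤ ε := hsum.le

end Tight

/-! ### Approximation from below and separation -/

lemma exists_boundedContinuous_le_of_lt {Y : Type*} [TopologicalSpace Y]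
    [CompletelyRegularSpace Y] {g : Y → ℝ≥0∞} (hg : LowerSemicontinuous g) {y : Y} {c : ℝ≥0∞}
    (hc : c < g y) :
    ∃ h : Y →ᵇ ℝ, 0 ≤ h ∧ (∀ z, ENNReal.ofReal (h z) ≤ g z) ∧ c < ENNReal.ofReal (h y) := by
  obtain ⟨d, hcd, hdg⟩ := ENNReal.lt_iff_exists_nnreal_btwn.1 hc
  obtain ⟨b, hb, hby, hb_out⟩ := CompletelyRegularSpace.completely_regular y
    {z | (d : ℝ≥0∞) < g z}ᶜ (hg.isOpen_preimage _).isClosed_compl (by simpa using hdg)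
  have hb_cont : Continuous fun z ↦ d * (1 - (b z : ℝ)) := by fun_prop
  have hb_nonneg (z : Y) : 0 ≤ d * (1 - (b z : ℝ)) :=
    mul_nonneg d.2 (sub_nonneg.2 (b z).2.2)
  have hb_le (z : Y) : d * (1 - (b z : ℝ)) ≤ d :=
    mul_le_of_le_one_right d.2 (by linarith [(b z).2.1])
  refine ⟨.ofNormedAddCommGroup _ hb_cont d fun z ↦ ?_, hb_nonneg, fun z ↦ ?_, ?_⟩
  · rw [Real.norm_of_nonneg (hb_nonneg z)]
    exact hb_le z
  · change ENNReal.ofReal (d * (1 - (b z : ℝ))) ≤ g z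
    by_cases hz : (d : ℝ≥0∞) < g z
    · exact (ENNReal.ofReal_le_of_le_toReal (by simpa using hb_le z)).trans hz.le
    · simp [hb_out hz]
  · change c < ENNReal.ofReal (d * (1 - (b y : ℝ)))
    simpa [hby] using hcd

lemma exists_monotone_boundedContinuous_iSup_eq {Y : Type*} [TopologicalSpace Y]
    [CompletelyRegularSpace Y] [SecondCountableTopology Y] {g : Y → ℝ≥0∞}
    (hg : LowerSemicontinuous g) :
    ∃ h : ℕ → (Y →ᵇ ℝ), Monotone h ∧ (∀ n, 0 ≤ h n) ∧
      ∀ y, ⨆ n, ENNReal.ofReal (h n y) = g y := by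
  let M : Set (Y →ᵇ ℝ) := {h | 0 ≤ h ∧ ∀ y, ENNReal.ofReal (h y) ≤ g y}
  let e : (Y →ᵇ ℝ) → Y → ℝ≥0∞ := fun h y ↦ ENNReal.ofReal (h y)
  have hM_zero : (0 : Y →ᵇ ℝ) ∈ M := ⟨le_rfl, by simp⟩
  have hM_lub : IsLUB (e '' M) g := by
    refine ⟨forall_mem_image.2 fun h hh ↦ hh.2, fun u hu y ↦ le_of_forall_lt fun c hc ↦ ?_⟩
    obtain ⟨h, h_nonneg, h_le, h_lt⟩ := exists_boundedContinuous_le_of_lt hg hc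
    exact h_lt.trans_le (hu (mem_image_of_mem e ⟨h_nonneg, h_le⟩) y)
  obtain ⟨T, hTM, hT_count, hT_lub⟩ := exists_countable_lowerSemicontinuous_isLUB
    (forall_mem_image.2 fun h _ ↦
      (ENNReal.continuous_ofReal.comp h.continuous).lowerSemicontinuous) hM_lub
  obtain ⟨u, hu⟩ := (hT_count.insert (e 0)).exists_eq_range (insert_nonempty _ _)
  have hu_mem (n : ℕ) : u n ∈ e '' M :=
    insert_subset (mem_image_of_mem e hM_zero) hTM (hu ▸ mem_range_self n)
  choose H hHM hHu using hu_mem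
  have hM_sup : ∀ h ∈ M, ∀ k ∈ M, h ⊔ k ∈ M := fun h hh k hk ↦ ⟨le_sup_of_le_left hh.1,
    fun z ↦ (ENNReal.ofReal_max ..).trans_le (max_le (hh.2 z) (hk.2 z))⟩
  have hPM (n : ℕ) : partialSups H n ∈ M :=
    Finset.sup'_induction Finset.nonempty_Iic H hM_sup fun k _ ↦ hHM k
  have hg_le : g ≤ fun y ↦ ⨆ n, ENNReal.ofReal (partialSups H n y) := by
    refine hT_lub.2 fun f hf y ↦ ?_
    obtain ⟨n, rfl⟩ : f ∈ range u := hu ▸ mem_insert_of_mem _ hf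
    rw [← hHu n]
    exact le_iSup_of_le n (ENNReal.ofReal_le_ofReal (le_partialSups H n y))
  exact ⟨partialSups H, (partialSups H).monotone, fun n ↦ (hPM n).1, fun y ↦
    le_antisymm (iSup_le fun n ↦ (hPM n).2 y) (hg_le y)⟩

lemma exists_boundedContinuous_lt_lintegral {Y : Type*} [TopologicalSpace Y]
    [CompletelyRegularSpace Y] [SecondCountableTopology Y] [MeasurableSpace Y]
    [OpensMeasurableSpace Y] {g : Y → ℝ≥0∞} (hg : LowerSemicontinuous g) {μ : Measure Y} {c : ℝ≥0∞}
    (hc : c < ∫⁻ y, g y ∂μ) :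
    ∃ h : Y →ᵇ ℝ, 0 ≤ h ∧ (∀ y, ENNReal.ofReal (h y) ≤ g y) ∧
      c < ∫⁻ y, ENNReal.ofReal (h y) ∂μ := by
  obtain ⟨h, h_mono, h_nonneg, h_iSup⟩ := exists_monotone_boundedContinuous_iSup_eq hg
  have h_lintegral : ∫⁻ y, g y ∂μ = ⨆ n, ∫⁻ y, ENNReal.ofReal (h n y) ∂μ := by
    rw [← lintegral_iSup (fun n ↦ (h n).continuous.measurable.ennreal_ofReal)
      fun m n hmn y ↦ ENNReal.ofReal_le_ofReal (h_mono hmn y)]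
    simp only [h_iSup]
  obtain ⟨n, hn⟩ := lt_iSup_iff.1 (h_lintegral ▸ hc)
  exact ⟨h n, h_nonneg n, fun y ↦ h_iSup y ▸ le_iSup (fun n ↦ ENNReal.ofReal (h n y)) n, hn⟩

lemma exists_lt_of_notMem_closure_of_convex_image {M W : Type*} [TopologicalSpace M]
    [AddCommGroup W] [Module ℝ W] (b : M → W →ₗ[ℝ] ℝ) {S : Set M} {m : M}
    (hb : ∀ L : Filter M, (∀ w, Tendsto (fun k ↦ b k w) L (𝓝 (b m w))) → L ≤ 𝓝 m)
    (hS : Convex ℝ (b '' S)) (hm : m ∉ closure S) :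
    ∃ (w : W) (u : ℝ), (∀ k ∈ S, b k w < u) ∧ u < b m w := by
  let B : (W →ₗ[ℝ] ℝ) →ₗ[ℝ] W →ₗ[ℝ] ℝ := .id
  let b' : M → WeakBilin B := b
  have hbm : b' m ∉ closure (b' '' S) := by
    refine fun hbm ↦ hm (mem_closure_iff_clusterPt.2 ?_)
    have h_comap_le : comap b' (𝓝 (b' m)) ≤ 𝓝 m := hb _ fun w ↦
      ((WeakBilin.eval_continuous B w).tendsto (b' m)).comp tendsto_comap
    have h_neBot : (map b' (comap b' (𝓝 (b' m)) ⊓ 𝓟 S)).NeBot := by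
      rw [inf_comm, Filter.push_pull, map_principal, inf_comm]
      exact mem_closure_iff_clusterPt.1 hbm
    exact ((map_neBot_iff b').1 h_neBot).mono (inf_le_inf_right _ h_comap_le)
  have hS' : Convex ℝ (b' '' S) := hS
  obtain ⟨f, u, hfu, huf⟩ := geometric_hahn_banach_closed_point hS'.closure isClosed_closure hbm
  obtain ⟨w, rfl⟩ := LinearMap.dualEmbedding_surjective B f
  exact ⟨w, u, fun k hk ↦ hfu _ (subset_closure ⟨k, hk, rfl⟩), huf⟩

/-! ### Entropy functions and their conjugates -/

namespace EntropyFn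

variable {F : EntropyFn}

/-- The Legendre conjugate `F*(r) = sup {r s - F(s) | s ≥ 0, F(s) < ∞}`, which is `-F°(-r)`. It is
real-valued when `F` is superlinear; otherwise `sSup` gives the value `0` where the supremum is
infinite. -/
def conj (F : EntropyFn) (r : ℝ) : ℝ :=
  sSup ((fun s ↦ r * s - (F.F s).toReal) '' {s | 0 ≤ s ∧ F.F s ≠ ∞})

/-- The part of the epigraph of `F` lying in the quadrant `[0, ∞) × [0, ∞)`. -/
def epigraph (F : EntropyFn) : Set (ℝ × ℝ) :=
  {p | 0 ≤ p.1 ∧ 0 ≤ p.2 ∧ F.F p.1 ≤ ENNReal.ofReal p.2}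

lemma isClosed_epigraph (F : EntropyFn) : IsClosed F.epigraph := by
  have h_closed : IsClosed {p : ℝ × ℝ | 0 ≤ p.1 ∧ F.F p.1 ≤ ENNReal.ofReal p.2} :=
    ((lowerSemicontinuousOn_iff_isClosed_epigraph isClosed_Ici).1 F.lsc).preimage
      (continuous_fst.prodMk (ENNReal.continuous_ofReal.comp continuous_snd))
  convert h_closed.inter (isClosed_Ici.preimage continuous_snd : IsClosed {p : ℝ × ℝ | 0 ≤ p.2})
    using 1
  ext p
  simp only [epigraph, mem_ofPred_eq, mem_inter_iff]
  tauto

lemma convex_epigraph (F : EntropyFn) : Convex ℝ F.epigraph := by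
  rintro ⟨x, y⟩ ⟨hx, hy, hxy⟩ ⟨x', y'⟩ ⟨hx', hy', hxy'⟩ t t' ht ht' htt
  obtain rfl : t' = 1 - t := by linarith
  refine ⟨add_nonneg (mul_nonneg ht hx) (mul_nonneg ht' hx'),
    add_nonneg (mul_nonneg ht hy) (mul_nonneg ht' hy'), ?_⟩
  calc F.F (t * x + (1 - t) * x')
      ≤ ENNReal.ofReal t * F.F x + ENNReal.ofReal (1 - t) * F.F x' :=
        F.convex' x hx x' hx' t ht (by linarith)
    _ ≤ ENNReal.ofReal t * ENNReal.ofReal y + ENNReal.ofReal (1 - t) * ENNReal.ofReal y' := by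
        gcongr
    _ = ENNReal.ofReal (t * y + (1 - t) * y') := by
        rw [ENNReal.ofReal_add (mul_nonneg ht hy) (mul_nonneg ht' hy'), ENNReal.ofReal_mul ht,
          ENNReal.ofReal_mul ht']

lemma ofReal_le_iff {s : ℝ} {a : ℝ} (hs : F.F s ≠ ∞) :
    ENNReal.ofReal a ≤ F.F s ↔ a ≤ (F.F s).toReal := by
  rw [← ENNReal.ofReal_toReal hs, ENNReal.ofReal_le_ofReal_iff ENNReal.toReal_nonneg,
    ENNReal.toReal_ofReal ENNReal.toReal_nonneg]

lemma ofReal_sub_mul_le {a b c : ℝ} (ha : 0 ≤ a) (hab : a < b) (hbc : b ≤ c) :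
    ENNReal.ofReal (c - a) * F.F b ≤
      ENNReal.ofReal (c - b) * F.F a + ENNReal.ofReal (b - a) * F.F c := by
  have hac : 0 < c - a := by linarith
  have hb : (c - b) / (c - a) * a + (1 - (c - b) / (c - a)) * c = b := by field_simp; ring
  have hba : (c - a) * (1 - (c - b) / (c - a)) = b - a := by field_simp; ring
  calc ENNReal.ofReal (c - a) * F.F b
      ≤ ENNReal.ofReal (c - a) * (ENNReal.ofReal ((c - b) / (c - a)) * F.F a +
          ENNReal.ofReal (1 - (c - b) / (c - a)) * F.F c) := by
        gcongr
        conv_lhs => rw [← hb]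
        exact F.convex' a ha c (mem_Ici.2 (by linarith)) _ (div_nonneg (by linarith) hac.le)
          ((div_le_one hac).2 (by linarith))
    _ = _ := by
        rw [mul_add, ← mul_assoc, ← mul_assoc, ← ENNReal.ofReal_mul hac.le,
          ← ENNReal.ofReal_mul hac.le, mul_div_cancel₀ _ hac.ne', hba]

lemma Superlinear.exists_slope_gt (hF : F.Superlinear) (a M : ℝ) :
    ∃ s, a < s ∧ ENNReal.ofReal (M * s) < F.F s := by
  have h_limsup : ENNReal.ofReal M < limsup (fun s : ℝ ↦ F.F s / ENNReal.ofReal s) atTop :=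
    ENNReal.ofReal_lt_top.trans_eq hF.symm
  obtain ⟨s, hMs, hs⟩ := ((frequently_lt_of_lt_limsup (by isBoundedDefault) h_limsup).and_eventually
    (eventually_gt_atTop (max a 0))).exists
  obtain ⟨has, hs₀⟩ := max_lt_iff.1 hs
  refine ⟨s, has, ?_⟩
  rwa [ENNReal.ofReal_mul' hs₀.le,
    ← ENNReal.lt_div_iff_mul_lt (.inl (by simpa using hs₀)) (.inl ENNReal.ofReal_ne_top)]

lemma Superlinear.exists_affine_le (hF : F.Superlinear) (M : ℝ) :
    ∃ c : ℝ, ∀ s, 0 ≤ s → ENNReal.ofReal (M * s - c) ≤ F.F s := by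
  obtain ⟨a, ha, hFa⟩ := F.dom
  obtain ⟨A, hA₀, hFaA⟩ : ∃ A : ℝ, 0 ≤ A ∧ F.F a = ENNReal.ofReal A :=
    ⟨_, ENNReal.toReal_nonneg, (ENNReal.ofReal_toReal hFa).symm⟩
  obtain ⟨b, hab, hFb⟩ := hF.exists_slope_gt a (|M| + A / a)
  have hb : 0 < b := ha.trans hab
  refine ⟨|M| * b, fun s hs ↦ ?_⟩
  rcases le_or_gt s b with hsb | hbs
  · have : M * s ≤ |M| * b := by gcongr; exact le_abs_self M
    rw [ENNReal.ofReal_of_nonpos (by linarith)]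
    exact zero_le
  by_cases hFs : F.F s = ∞
  · exact hFs ▸ le_top
  rw [ofReal_le_iff hFs]
  have h_chord := (mul_le_mul_right hFb.le _).trans (F.ofReal_sub_mul_le ha.le hab hbs.le)
  rw [hFaA, ← ENNReal.ofReal_toReal hFs, ← ENNReal.ofReal_mul (by linarith),
    ← ENNReal.ofReal_mul (by linarith), ← ENNReal.ofReal_mul (by linarith),
    ← ENNReal.ofReal_add (by positivity) (by positivity),
    ENNReal.ofReal_le_ofReal_iff (by positivity)] at h_chord
  have hA : A ≤ A / a * b := by
    rw [div_mul_eq_mul_div, le_div_iff₀ ha]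
    gcongr
  have h_mul : (b - a) * (|M| * (s - b)) ≤ (b - a) * (F.F s).toReal :=
    calc (b - a) * (|M| * (s - b)) ≤ b * (|M| * (s - a)) := by gcongr; linarith
      _ = (s - a) * ((|M| + A / a) * b) - (s - a) * (A / a * b) := by ring
      _ ≤ (s - b) * A + (b - a) * (F.F s).toReal - (s - b) * A := by gcongr; linarith
      _ = (b - a) * (F.F s).toReal := by ring
  calc M * s - |M| * b ≤ |M| * s - |M| * b := by gcongr; exact le_abs_self M
    _ = |M| * (s - b) := by ring
    _ ≤ (F.F s).toReal := le_of_mul_le_mul_left h_mul (by linarith)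

lemma Superlinear.conj_le_iff (hF : F.Superlinear) {r a : ℝ} :
    F.conj r ≤ a ↔ ∀ s, 0 ≤ s → ENNReal.ofReal (r * s - a) ≤ F.F s := by
  obtain ⟨s₀, hs₀, hFs₀⟩ := F.dom
  obtain ⟨c, hc⟩ := hF.exists_affine_le r
  have h_bdd : BddAbove ((fun s ↦ r * s - (F.F s).toReal) '' {s | 0 ≤ s ∧ F.F s ≠ ∞}) := by
    refine ⟨c, forall_mem_image.2 fun s hs ↦ ?_⟩
    linarith [(ofReal_le_iff hs.2).1 (hc s hs.1)]
  rw [conj, csSup_le_iff h_bdd ⟨_, mem_image_of_mem _ ⟨hs₀.le, hFs₀⟩⟩, forall_mem_image]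
  refine ⟨fun h s hs ↦ ?_, fun h s hs ↦ ?_⟩
  · by_cases hFs : F.F s = ∞
    · exact hFs ▸ le_top
    · exact (ofReal_le_iff hFs).2 (by linarith [h ⟨hs, hFs⟩])
  · linarith [(ofReal_le_iff hs.2).1 (h s hs.1)]

lemma Superlinear.ofReal_mul_sub_conj_le (hF : F.Superlinear) (r : ℝ) {s : ℝ} (hs : 0 ≤ s) :
    ENNReal.ofReal (r * s - F.conj r) ≤ F.F s :=
  hF.conj_le_iff.1 le_rfl s hs

lemma Superlinear.convexOn_conj (hF : F.Superlinear) : ConvexOn ℝ univ F.conj := by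
  refine ⟨convex_univ, fun r _ r' _ t t' ht ht' htt ↦ hF.conj_le_iff.2 fun s hs ↦ ?_⟩
  by_cases hFs : F.F s = ∞
  · exact hFs ▸ le_top
  have hr := (ofReal_le_iff hFs).1 (hF.ofReal_mul_sub_conj_le r hs)
  have hr' := (ofReal_le_iff hFs).1 (hF.ofReal_mul_sub_conj_le r' hs)
  refine (ofReal_le_iff hFs).2 ?_
  calc (t • r + t' • r') * s - (t • F.conj r + t' • F.conj r')
      = t * (r * s - F.conj r) + t' * (r' * s - F.conj r') := by simp only [smul_eq_mul]; ring
    _ ≤ t * (F.F s).toReal + t' * (F.F s).toReal := by gcongr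
    _ = (F.F s).toReal := by rw [← add_mul, htt, one_mul]

lemma Superlinear.continuous_conj (hF : F.Superlinear) : Continuous F.conj :=
  continuousOn_univ.1 (hF.convexOn_conj.continuousOn isOpen_univ)

lemma Superlinear.exists_lipschitzOnWith_conj (hF : F.Superlinear) (M : ℝ) :
    ∃ L, LipschitzOnWith L F.conj (Icc (-M) M) := by
  have h_conv : ConvexOn ℝ (Metric.ball 0 (M + 2)) F.conj :=
    hF.convexOn_conj.subset (subset_univ _) (convex_ball _ _)
  have h_bdd : Bornology.IsBounded (F.conj '' Metric.ball 0 (M + 2)) :=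
    ((isCompact_closedBall 0 (M + 2)).image hF.continuous_conj).isBounded.subset
      (image_mono Metric.ball_subset_closedBall)
  obtain ⟨L, hL⟩ := h_conv.exists_lipschitzOnWith_of_isBounded (r' := M + 1) (by linarith) h_bdd
  refine ⟨L, hL.mono fun r hr ↦ ?_⟩
  rw [mem_ball_zero_iff, Real.norm_eq_abs]
  linarith [abs_le.2 hr]

lemma exists_separating_affine {s r : ℝ} (hr : ENNReal.ofReal r < F.F s) :
    ∃ β α u : ℝ, α ≤ 0 ∧ u < β * s + α * r ∧
      ∀ x, 0 ≤ x → F.F x ≠ ∞ → β * x + α * (F.F x).toReal < u := by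
  obtain ⟨f, u, hfu, huf⟩ := geometric_hahn_banach_closed_point F.convex_epigraph
    F.isClosed_epigraph (x := (s, r)) fun h ↦ h.2.2.not_gt hr
  have hf (x y : ℝ) : f (x, y) = f (1, 0) * x + f (0, 1) * y := by
    have h_basis : ((x, y) : ℝ × ℝ) = x • (1, 0) + y • (0, 1) := by simp
    rw [h_basis, map_add, map_smul, map_smul, smul_eq_mul, smul_eq_mul, mul_comm x, mul_comm y]
  refine ⟨f (1, 0), f (0, 1), u, ?_, hf s r ▸ huf, fun x hx hFx ↦ ?_⟩
  · obtain ⟨x, hx, hFx⟩ := F.dom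
    by_contra! hα
    set y := max (F.F x).toReal ((u - f (1, 0) * x) / f (0, 1))
    have hy : u - f (1, 0) * x ≤ f (0, 1) * y := (div_le_iff₀' hα).1 (le_max_right _ _)
    have hxy := hfu (x, y) ⟨hx.le, ENNReal.toReal_nonneg.trans (le_max_left _ _),
      (ENNReal.ofReal_toReal hFx).symm.trans_le (ENNReal.ofReal_le_ofReal (le_max_left _ _))⟩
    linarith [hf x y]
  · exact hf x _ ▸ hfu _ ⟨hx, ENNReal.toReal_nonneg, (ENNReal.ofReal_toReal hFx).ge⟩

lemma Superlinear.exists_lt_ofReal_mul_sub_conj (hF : F.Superlinear) {s : ℝ} {c : ℝ≥0∞}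
    (hc : c < F.F s) : ∃ m, c < ENNReal.ofReal (m * s - F.conj m) := by
  obtain ⟨r, hcr, hrF⟩ := ENNReal.lt_iff_exists_nnreal_btwn.1 hc
  rw [← ENNReal.ofReal_coe_nnreal] at hcr hrF
  obtain ⟨β, α, u, hα, hu, h_below⟩ := exists_separating_affine hrF
  -- Adding `(x, y) ↦ -y` to a large multiple of the separating functional makes its level sets
  -- graphs even if they were vertical.
  set k := (r + 1) / (β * s + α * r - u)
  have hk : k * (β * s + α * r - u) = r + 1 := div_mul_cancel₀ _ (sub_pos.2 hu).ne'
  have hk₀ : 0 ≤ k := div_nonneg (by positivity) (sub_pos.2 hu).le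
  have hkα : 0 < 1 - k * α := by linarith [mul_nonpos_of_nonneg_of_nonpos hk₀ hα]
  have h_conj : F.conj (k * β / (1 - k * α)) ≤ k * u / (1 - k * α) := by
    refine hF.conj_le_iff.2 fun x hx ↦ ?_
    by_cases hFx : F.F x = ∞
    · exact hFx ▸ le_top
    have hy : 0 ≤ (F.F x).toReal := ENNReal.toReal_nonneg
    have h := mul_le_mul_of_nonneg_left (h_below x hx hFx).le hk₀
    rw [ofReal_le_iff hFx, div_mul_eq_mul_div, ← sub_div, div_le_iff₀ hkα]
    linarith
  refine ⟨k * β / (1 - k * α), hcr.trans_le (ENNReal.ofReal_le_ofReal ?_)⟩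
  calc (r : ℝ) ≤ (k * β * s - k * u) / (1 - k * α) := by
        rw [le_div_iff₀ hkα]
        linarith
    _ = k * β / (1 - k * α) * s - k * u / (1 - k * α) := by ring
    _ ≤ k * β / (1 - k * α) * s - F.conj (k * β / (1 - k * α)) := sub_le_sub_left h_conj _

end EntropyFn

/-! ### Integrals of extended-real functions -/

section EIntegral

variable {α : Type*} [MeasurableSpace α] {μ : Measure α}

lemma posE_eq_toENNReal : posE = EReal.toENNReal := rfl

lemma eIntegral_mono_ae {f g : α → EReal} (h : f ≤ᵐ[μ] g) : eIntegral μ f ≤ eIntegral μ g := by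
  refine EReal.sub_le_sub (EReal.coe_ennreal_le_coe_ennreal_iff.2 (lintegral_mono_ae ?_))
    (EReal.coe_ennreal_le_coe_ennreal_iff.2 (lintegral_mono_ae ?_))
  · exact h.mono fun x hx ↦ EReal.toENNReal_le_toENNReal hx
  · exact h.mono fun x hx ↦ EReal.toENNReal_le_toENNReal (EReal.neg_le_neg_iff.2 hx)

lemma eIntegral_congr_ae {f g : α → EReal} (h : f =ᵐ[μ] g) : eIntegral μ f = eIntegral μ g :=
  (eIntegral_mono_ae h.le).antisymm (eIntegral_mono_ae h.symm.le)

lemma eIntegral_coe {c : α → ℝ} (hc : Integrable c μ) :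
    eIntegral μ (fun x ↦ (c x : EReal)) = (∫ x, c x ∂μ : ℝ) := by
  have hpos : ∫⁻ x, ENNReal.ofReal (c x) ∂μ ≠ ∞ := hc.lintegral_lt_top.ne
  have hneg : ∫⁻ x, ENNReal.ofReal (-c x) ∂μ ≠ ∞ := hc.neg.lintegral_lt_top.ne
  rw [integral_eq_lintegral_pos_part_sub_lintegral_neg_part hc, EReal.coe_sub,
    EReal.coe_ennreal_toReal hpos, EReal.coe_ennreal_toReal hneg]
  simp only [eIntegral, posE_eq_toENNReal, ← EReal.coe_neg, EReal.real_coe_toENNReal]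

lemma eIntegral_coe_ennreal_add_coe_of_eq_top {g : α → ℝ≥0∞} {c : α → ℝ} (hc : Integrable c μ)
    (hg : ∫⁻ x, g x ∂μ = ∞) : eIntegral μ (fun x ↦ (g x : EReal) + (c x : EReal)) = ⊤ := by
  have hneg : ∫⁻ x, ENNReal.ofReal (-c x) ∂μ ≠ ∞ := hc.neg.lintegral_lt_top.ne
  have h_pos : ∫⁻ x, ((g x : EReal) + c x).toENNReal ∂μ = ∞ := by
    have h_le : ∞ ≤ ∫⁻ x, ((g x : EReal) + c x).toENNReal ∂μ + ∫⁻ x, ENNReal.ofReal (-c x) ∂μ := by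
      rw [← hg, ← lintegral_add_right' _ (by fun_prop)]
      refine lintegral_mono fun x ↦ ?_
      calc g x = ((g x : EReal) + c x + (-c x : ℝ)).toENNReal := by
            rw [EReal.coe_neg, ← sub_eq_add_neg, EReal.add_sub_cancel_right, EReal.toENNReal_coe]
        _ ≤ _ := EReal.toENNReal_add_le
    exact (ENNReal.add_eq_top.1 (top_le_iff.1 h_le)).resolve_right hneg
  have h_neg : ∫⁻ x, (-((g x : EReal) + c x)).toENNReal ∂μ ≠ ∞ := by
    refine ne_top_of_le_ne_top hneg (lintegral_mono fun x ↦ ?_)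
    rw [← EReal.real_coe_toENNReal]
    refine EReal.toENNReal_le_toENNReal ?_
    rw [EReal.coe_neg, EReal.neg_le_neg_iff]
    exact le_add_of_nonneg_left (EReal.coe_ennreal_nonneg _)
  rw [eIntegral, posE_eq_toENNReal, h_pos, ← EReal.coe_ennreal_toReal h_neg, EReal.coe_ennreal_top,
    EReal.top_sub_coe]

lemma eIntegral_coe_ennreal_add_coe {g : α → ℝ≥0∞} (hg : AEMeasurable g μ) {c : α → ℝ}
    (hc : Integrable c μ) :
    eIntegral μ (fun x ↦ (g x : EReal) + (c x : EReal)) =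
      (∫⁻ x, g x ∂μ : ℝ≥0∞) + (∫ x, c x ∂μ : ℝ) := by
  by_cases hg_top : ∫⁻ x, g x ∂μ = ∞
  · rw [eIntegral_coe_ennreal_add_coe_of_eq_top hc hg_top, hg_top, EReal.coe_ennreal_top,
      EReal.top_add_coe]
  · have hg_fin : ∀ᵐ x ∂μ, g x < ∞ := ae_lt_top' hg hg_top
    have h_int : Integrable (fun x ↦ (g x).toReal) μ :=
      integrable_toReal_of_lintegral_ne_top hg hg_top
    rw [← EReal.coe_ennreal_toReal hg_top, ← integral_toReal hg hg_fin, ← EReal.coe_add,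
      ← integral_add h_int hc]
    refine Eq.trans ?_ (eIntegral_coe (h_int.add hc))
    refine eIntegral_congr_ae (hg_fin.mono fun x hx ↦ ?_)
    simp only [EReal.coe_add, EReal.coe_ennreal_toReal hx.ne]

lemma coe_toENNReal_sub_add {K : ℝ} {e : EReal} (h : (K : EReal) ≤ e) :
    ((e - K).toENNReal : EReal) + K = e := by
  rw [EReal.coe_toENNReal ((EReal.sub_nonneg (by simp) (by simp)).2 h), EReal.sub_add_cancel]

lemma eIntegral_eq_lintegral_add [IsFiniteMeasure μ] {f : α → EReal} (hf : Measurable f) {K : ℝ}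
    (hK : ∀ x, (K : EReal) ≤ f x) :
    eIntegral μ f = (∫⁻ x, (f x - K).toENNReal ∂μ : ℝ≥0∞) + (μ.real univ * K : ℝ) := by
  have h_meas : Measurable fun x ↦ (f x - K).toENNReal := by fun_prop
  have h := eIntegral_coe_ennreal_add_coe h_meas.aemeasurable (integrable_const (μ := μ) K)
  rw [integral_const, smul_eq_mul] at h
  rw [← h]
  simp only [coe_toENNReal_sub_add (hK _)]

lemma eIntegral_add_coe [IsFiniteMeasure μ] {f : α → EReal} (hf : Measurable f) {K : ℝ}
    (hK : ∀ x, (K : EReal) ≤ f x) {c : α → ℝ} (hc : Integrable c μ) :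
    eIntegral μ (fun x ↦ f x + c x) = eIntegral μ f + (∫ x, c x ∂μ : ℝ) := by
  have h_meas : Measurable fun x ↦ (f x - K).toENNReal := by fun_prop
  rw [eIntegral_eq_lintegral_add hf hK, add_assoc, ← EReal.coe_add, ← smul_eq_mul, ← integral_const,
    ← integral_add (integrable_const K) hc,
    ← eIntegral_coe_ennreal_add_coe h_meas.aemeasurable (by fun_prop)]
  simp_rw [EReal.coe_add, ← add_assoc, coe_toENNReal_sub_add (hK _)]

lemma exists_integrable_of_eIntegral_ne_top [IsFiniteMeasure μ] {f : α → EReal}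
    (hf : Measurable f) {K : ℝ} (hK : ∀ x, (K : EReal) ≤ f x) (h : eIntegral μ f ≠ ⊤) :
    ∃ g : α → ℝ, Integrable g μ ∧ f =ᵐ[μ] fun x ↦ (g x : EReal) := by
  have h_meas : Measurable fun x ↦ (f x - K).toENNReal := by fun_prop
  have h_fin : ∫⁻ x, (f x - K).toENNReal ∂μ ≠ ∞ := by
    intro h_top
    rw [eIntegral_eq_lintegral_add hf hK, h_top, EReal.coe_ennreal_top, EReal.top_add_coe] at h
    exact h rfl
  refine ⟨fun x ↦ (f x - K).toENNReal.toReal + K,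
    (integrable_toReal_of_lintegral_ne_top h_meas.aemeasurable h_fin).add (integrable_const K),
    (ae_lt_top h_meas h_fin).mono fun x hx ↦ ?_⟩
  simp only [EReal.coe_add, EReal.coe_ennreal_toReal hx.ne, coe_toENNReal_sub_add (hK x)]

lemma lowerSemicontinuous_toENNReal_sub {E : Type*} [TopologicalSpace E] {f : E → EReal}
    (hf : LowerSemicontinuous f) (K : ℝ) : LowerSemicontinuous fun e ↦ (f e - K).toENNReal := by
  have h_cont : Continuous fun e : EReal ↦ (e - K).toENNReal :=
    EReal.continuous_toENNReal.comp <| continuous_iff_continuousAt.2 fun e ↦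
      (EReal.continuousAt_add (p := (e, -(K : EReal))) (by simp) (by simp)).comp
        (f := fun e : EReal ↦ (e, -(K : EReal))) (by fun_prop)
  exact h_cont.comp_lowerSemicontinuous hf fun _ _ h ↦
    EReal.toENNReal_le_toENNReal (EReal.sub_le_sub h le_rfl)

lemma eIntegral_le_of_forall_integral_le {E : Type*} [TopologicalSpace E]
    [CompletelyRegularSpace E] [SecondCountableTopology E] [MeasurableSpace E] [BorelSpace E]
    {μ : Measure E} [IsFiniteMeasure μ] {f : E → EReal} (hf : LowerSemicontinuous f) {K : ℝ}
    (hK : ∀ x, (K : EReal) ≤ f x) {a : ℝ}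
    (h : ∀ φ : E →ᵇ ℝ, (∀ x, (φ x : EReal) ≤ f x) → ∫ x, φ x ∂μ ≤ a) : eIntegral μ f ≤ a := by
  have ha : 0 ≤ a - μ.real univ * K := by
    have := h (.const E K) hK
    simp only [BoundedContinuousFunction.const_apply, integral_const, smul_eq_mul] at this
    linarith
  suffices ∫⁻ x, (f x - K).toENNReal ∂μ ≤ ENNReal.ofReal (a - μ.real univ * K) by
    calc eIntegral μ f = _ := eIntegral_eq_lintegral_add hf.measurable hK
      _ ≤ (ENNReal.ofReal (a - μ.real univ * K) : EReal) + (μ.real univ * K : ℝ) := by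
        gcongr
        exact EReal.coe_ennreal_le_coe_ennreal_iff.2 this
      _ = a := by
        rw [EReal.coe_ennreal_ofReal, max_eq_left ha, ← EReal.coe_add, sub_add_cancel]
  by_contra! h_lt
  obtain ⟨φ, hφ₀, hφ, hφ_lt⟩ :=
    exists_boundedContinuous_lt_lintegral (lowerSemicontinuous_toENNReal_sub hf K) h_lt
  rw [← ofReal_integral_eq_lintegral_ofReal (φ.integrable μ) (.of_forall hφ₀),
    ENNReal.ofReal_lt_ofReal_iff_of_nonneg ha] at hφ_lt
  have h_le := h (φ + .const E K) fun x ↦ by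
    rw [← coe_toENNReal_sub_add (hK x)]
    simp only [BoundedContinuousFunction.coe_add, Pi.add_apply,
      BoundedContinuousFunction.const_apply, EReal.coe_add]
    gcongr
    refine (EReal.coe_le_coe (le_max_left _ 0)).trans ?_
    rw [← EReal.coe_ennreal_ofReal]
    exact EReal.coe_ennreal_le_coe_ennreal_iff.2 (hφ x)
  simp only [BoundedContinuousFunction.coe_add, Pi.add_apply,
    BoundedContinuousFunction.const_apply] at h_le
  rw [integral_add (φ.integrable μ) (integrable_const K), integral_const, smul_eq_mul] at h_le
  linarith

end EIntegral

/-! ### The entropy functional and its dual representation -/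

lemma integrable_comp_of_abs_le {α : Type*} [MeasurableSpace α] {μ : Measure α} [IsFiniteMeasure μ]
    {g : ℝ → ℝ} (hg : Continuous g) {f : α → ℝ} (hf : Measurable f) {M : ℝ}
    (hfM : ∀ x, |f x| ≤ M) : Integrable (fun x ↦ g (f x)) μ := by
  obtain ⟨B, hB⟩ := isCompact_Icc.exists_bound_of_continuousOn (hg.continuousOn (s := Icc (-M) M))
  exact .of_bound (hg.measurable.comp hf).aestronglyMeasurable B
    (.of_forall fun x ↦ hB _ (abs_le.1 (hfM x)))

lemma exists_boundedContinuous_integral_abs_sub_le {Y : Type*} [TopologicalSpace Y] [NormalSpace Y]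
    [MeasurableSpace Y] [BorelSpace Y] {μ : Measure Y} [IsFiniteMeasure μ] [μ.WeaklyRegular]
    {b : Y → ℝ} (hb : Measurable b) {M : ℝ} (hbM : ∀ y, |b y| ≤ M) {ε : ℝ} (hε : 0 < ε) :
    ∃ φ : Y →ᵇ ℝ, (∀ y, |φ y| ≤ M) ∧ ∫ y, |b y - φ y| ∂μ ≤ ε := by
  have hb_int : Integrable b μ := .of_bound hb.aestronglyMeasurable M (.of_forall hbM)
  obtain ⟨φ, hφ, -⟩ := hb_int.exists_boundedContinuous_integral_sub_le hε
  have hφM (y : Y) : |max (-M) (min M (φ y))| ≤ M :=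
    abs_le.2 ⟨le_max_left _ _,
      max_le (neg_le_self ((abs_nonneg _).trans (hbM y))) (min_le_left _ _)⟩
  let ψ : Y →ᵇ ℝ :=
    .ofNormedAddCommGroup (fun y ↦ max (-M) (min M (φ y))) (by fun_prop) M hφM
  have hψ_int : Integrable (fun y ↦ |b y - φ y|) μ := (hb_int.sub (φ.integrable μ)).abs
  refine ⟨ψ, hφM, (integral_mono (hb_int.sub (ψ.integrable μ)).abs hψ_int fun y ↦ ?_).trans hφ⟩
  have hb_clamp : b y = max (-M) (min M (b y)) := by
    rw [min_eq_right (abs_le.1 (hbM y)).2, max_eq_right (abs_le.1 (hbM y)).1]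
  calc |b y - max (-M) (min M (φ y))|
      = |max (-M) (min M (b y)) - max (-M) (min M (φ y))| := by rw [← hb_clamp]
    _ ≤ |b y - φ y| := (abs_max_sub_max_le_max _ _ _ _).trans <| max_le (by simp) <|
        (abs_min_sub_min_le_max _ _ _ _).trans <| max_le (by simp) le_rfl

lemma exists_measurable_argmax {α Y : Type*} [MeasurableSpace α] {T : Finset α}
    (hT : T.Nonempty) [MeasurableSpace Y] {g : α → Y → ℝ} (hg : ∀ a, Measurable (g a)) :
    ∃ k : Y → α, Measurable k ∧ ∀ y, k y ∈ T ∧ ∀ a ∈ T, g a y ≤ g (k y) y := by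
  classical
  induction hT using Finset.Nonempty.cons_induction with
  | singleton a => exact ⟨fun _ ↦ a, measurable_const, by simp⟩
  | cons a T ha _ ih =>
    obtain ⟨k, hk, hkT⟩ := ih
    have h_meas : MeasurableSet {y | ∀ b ∈ T, g b y ≤ g a y} := by
      simp only [ofPred_forall]
      exact Finset.measurableSet_biInter T fun b _ ↦ measurableSet_le (hg b) (hg a)
    refine ⟨fun y ↦ if ∀ b ∈ T, g b y ≤ g a y then a else k y,
      measurable_const.ite h_meas hk, fun y ↦ ?_⟩
    by_cases hy : ∀ b ∈ T, g b y ≤ g a y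
    · simp only [if_pos hy, Finset.mem_cons, true_or, forall_eq_or_imp, le_refl, true_and]
      exact hy
    · obtain ⟨b, hbT, hb⟩ := not_forall₂.1 hy
      simp only [if_neg hy, Finset.mem_cons, forall_eq_or_imp]
      exact ⟨.inr (hkT y).1, (not_le.1 hb).le.trans ((hkT y).2 b hbT), (hkT y).2⟩

namespace EntropyFn

variable {F : EntropyFn} {α : Type*} [MeasurableSpace α]

lemma measurable_comp (F : EntropyFn) {f : α → ℝ} (hf : Measurable f) (hf₀ : ∀ x, 0 ≤ f x) :
    Measurable fun x ↦ F.F (f x) :=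
  (lowerSemicontinuous_restrict_iff.2 F.lsc).measurable.comp (hf.subtype_mk (h := hf₀))

lemma Superlinear.iSup_ofReal_mul_sub_conj (hF : F.Superlinear) {s : ℝ} (hs : 0 ≤ s) :
    ⨆ q : ℚ, ENNReal.ofReal (q * s - F.conj q) = F.F s := by
  refine le_antisymm (iSup_le fun q ↦ hF.ofReal_mul_sub_conj_le q hs)
    (le_of_forall_lt fun c hc ↦ ?_)
  have h_open : IsOpen {r : ℝ | c < ENNReal.ofReal (r * s - F.conj r)} :=
    isOpen_Ioi.preimage (ENNReal.continuous_ofReal.comp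
      ((continuous_id.mul continuous_const).sub hF.continuous_conj))
  obtain ⟨q, hq⟩ := Rat.denseRange_cast.exists_mem_open h_open (hF.exists_lt_ofReal_mul_sub_conj hc)
  exact lt_iSup_iff.2 ⟨q, hq⟩

lemma Superlinear.conj_zero_nonpos (hF : F.Superlinear) : F.conj 0 ≤ 0 :=
  hF.conj_le_iff.2 fun s _ ↦ by simp

variable {γ μ : Measure α}

lemma entF_eq_lintegral (F : EntropyFn) (hγμ : γ ≪ μ) :
    entF F γ μ = ∫⁻ x, F.F (γ.rnDeriv μ x).toReal ∂μ := by
  rw [entF, Measure.singularPart_eq_zero_of_ac hγμ, Measure.coe_zero, Pi.zero_apply, mul_zero,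
    add_zero]

lemma Superlinear.absolutelyContinuous [SigmaFinite γ] [SigmaFinite μ] (hF : F.Superlinear)
    (h : entF F γ μ ≠ ∞) : γ ≪ μ := by
  rw [entF, show F.recC = ∞ from hF] at h
  have h_sing : γ.singularPart μ univ = 0 := by
    by_contra h₀
    exact h (by rw [ENNReal.top_mul h₀, add_top])
  exact (Measure.singularPart_eq_zero γ μ).1 (Measure.measure_univ_eq_zero.1 h_sing)

section Duality

variable {Y : Type*} [TopologicalSpace Y] [TopologicalSpace.PseudoMetrizableSpace Y]
  [MeasurableSpace Y] [BorelSpace Y] {γ μ : Measure Y} [IsFiniteMeasure γ] [IsFiniteMeasure μ]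
  {a : ℝ}

lemma Superlinear.integral_le_add_integral_conj (hF : F.Superlinear)
    (h : ∀ φ : Y →ᵇ ℝ, ∫ y, φ y ∂γ ≤ a + ∫ y, F.conj (φ y) ∂μ)
    {b : Y → ℝ} (hb : Measurable b) {M : ℝ} (hbM : ∀ y, |b y| ≤ M) :
    ∫ y, b y ∂γ ≤ a + ∫ y, F.conj (b y) ∂μ := by
  obtain ⟨L, hL⟩ := hF.exists_lipschitzOnWith_conj M
  refine le_of_forall_pos_le_add fun ε hε ↦ ?_
  obtain ⟨φ, hφM, hφ⟩ := exists_boundedContinuous_integral_abs_sub_le (μ := γ + μ) hb hbM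
    (ε := ε / (1 + L)) (by positivity)
  have hb_int (ν : Measure Y) [IsFiniteMeasure ν] : Integrable b ν :=
    .of_bound hb.aestronglyMeasurable M (.of_forall hbM)
  have h_abs (ν : Measure Y) [IsFiniteMeasure ν] : Integrable (fun y ↦ |b y - φ y|) ν :=
    ((hb_int ν).sub (φ.integrable ν)).abs
  have hb_conj := integrable_comp_of_abs_le (μ := μ) hF.continuous_conj hb hbM
  have hφ_conj := integrable_comp_of_abs_le (μ := μ) hF.continuous_conj
    φ.continuous.measurable hφM
  rw [integral_add_measure (h_abs γ) (h_abs μ), le_div_iff₀' (by positivity)] at hφ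
  have hγ : ∫ y, b y ∂γ ≤ ∫ y, φ y ∂γ + ∫ y, |b y - φ y| ∂γ := by
    rw [← integral_add (φ.integrable γ) (h_abs γ)]
    refine integral_mono (hb_int γ) ((φ.integrable γ).add (h_abs γ)) fun y ↦ ?_
    linarith [le_abs_self (b y - φ y)]
  have hμ : ∫ y, F.conj (φ y) ∂μ ≤ ∫ y, F.conj (b y) ∂μ + L * ∫ y, |b y - φ y| ∂μ := by
    rw [← integral_const_mul, ← integral_add hb_conj ((h_abs μ).const_mul _)]
    refine integral_mono hφ_conj (hb_conj.add ((h_abs μ).const_mul _)) fun y ↦ ?_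
    have := hL.dist_le_mul _ (abs_le.1 (hφM y)) _ (abs_le.1 (hbM y))
    rw [dist_comm (φ y), Real.dist_eq, Real.dist_eq] at this
    linarith [le_abs_self (F.conj (φ y) - F.conj (b y))]
  have hγ₀ : 0 ≤ ∫ y, |b y - φ y| ∂γ := integral_nonneg fun y ↦ abs_nonneg _
  have hμ₀ : 0 ≤ ∫ y, |b y - φ y| ∂μ := integral_nonneg fun y ↦ abs_nonneg _
  nlinarith [h φ, L.coe_nonneg]

lemma Superlinear.mul_measureReal_le (hF : F.Superlinear)
    (h : ∀ φ : Y →ᵇ ℝ, ∫ y, φ y ∂γ ≤ a + ∫ y, F.conj (φ y) ∂μ) {S : Set Y}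
    (hS : MeasurableSet S) {M : ℝ} (hM : 0 ≤ M) :
    M * γ.real S ≤ a + F.conj M * μ.real S := by
  have hb : Measurable (S.indicator fun _ ↦ M) := measurable_const.indicator hS
  have hbM (y : Y) : |S.indicator (fun _ ↦ M) y| ≤ M := by
    by_cases hy : y ∈ S <;> simp [hy, abs_of_nonneg hM, hM]
  calc M * γ.real S = ∫ y, S.indicator (fun _ ↦ M) y ∂γ := by
        rw [integral_indicator_const _ hS, smul_eq_mul, mul_comm]
    _ ≤ a + ∫ y, F.conj (S.indicator (fun _ ↦ M) y) ∂μ :=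
        hF.integral_le_add_integral_conj h hb hbM
    _ ≤ a + ∫ y, S.indicator (fun _ ↦ F.conj M) y ∂μ := by
        gcongr
        · exact integrable_comp_of_abs_le hF.continuous_conj hb hbM
        · exact (integrable_const _).indicator hS
        · intro y
          by_cases hy : y ∈ S <;> simp [hy, hF.conj_zero_nonpos]
    _ = a + F.conj M * μ.real S := by
        rw [integral_indicator_const _ hS, smul_eq_mul, mul_comm]

lemma Superlinear.absolutelyContinuous_of_integral_le (hF : F.Superlinear)
    (h : ∀ φ : Y →ᵇ ℝ, ∫ y, φ y ∂γ ≤ a + ∫ y, F.conj (φ y) ∂μ) : γ ≪ μ := by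
  refine Measure.AbsolutelyContinuous.mk fun S hS hμS ↦ ?_
  rw [← measureReal_eq_zero_iff] at hμS ⊢
  by_contra hγS
  obtain ⟨n, hn⟩ := exists_nat_gt (a / γ.real S)
  rw [div_lt_iff₀ (measureReal_nonneg.lt_of_ne' hγS)] at hn
  refine hn.not_ge ((hF.mul_measureReal_le h hS n.cast_nonneg).trans_eq ?_)
  rw [hμS, mul_zero, add_zero]

lemma Superlinear.lintegral_biSup_le_ofReal (hF : F.Superlinear)
    (h : ∀ φ : Y →ᵇ ℝ, ∫ y, φ y ∂γ ≤ a + ∫ y, F.conj (φ y) ∂μ) (T : Finset ℚ) :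
    ∫⁻ y, ⨆ q ∈ T, ENNReal.ofReal (q * (γ.rnDeriv μ y).toReal - F.conj q) ∂μ ≤
      ENNReal.ofReal a := by
  set f : Y → ℝ := fun y ↦ (γ.rnDeriv μ y).toReal
  have hf : Measurable f := (Measure.measurable_rnDeriv γ μ).ennreal_toReal
  obtain ⟨k, hk, hkT⟩ := exists_measurable_argmax (T.insert_nonempty 0)
    (g := fun q : ℚ ↦ fun y ↦ q * f y - F.conj q) fun q ↦ (hf.const_mul _).sub_const _
  have hb : Measurable fun y ↦ (k y : ℝ) := (measurable_of_countable _).comp hk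
  have hbM (y : Y) : |(k y : ℝ)| ≤ ∑ q ∈ insert 0 T, |(q : ℝ)| :=
    Finset.single_le_sum (f := fun q : ℚ ↦ |(q : ℝ)|) (fun q _ ↦ abs_nonneg _) (hkT y).1
  have h_nonneg (y : Y) : 0 ≤ k y * f y - F.conj (k y) := by
    have := (hkT y).2 0 (Finset.mem_insert_self 0 T)
    rw [Rat.cast_zero, zero_mul] at this
    linarith [hF.conj_zero_nonpos]
  have h_mul : Integrable (fun y ↦ k y * f y) μ :=
    Measure.integrable_toReal_rnDeriv.bdd_mul hb.aestronglyMeasurable (.of_forall hbM)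
  have h_conj := integrable_comp_of_abs_le (μ := μ) hF.continuous_conj hb hbM
  calc ∫⁻ y, ⨆ q ∈ T, ENNReal.ofReal (q * f y - F.conj q) ∂μ
      ≤ ∫⁻ y, ENNReal.ofReal (k y * f y - F.conj (k y)) ∂μ :=
        lintegral_mono fun y ↦ iSup₂_le fun q hq ↦
          ENNReal.ofReal_le_ofReal ((hkT y).2 q (Finset.mem_insert_of_mem hq))
    _ = ENNReal.ofReal (∫ y, k y * f y - F.conj (k y) ∂μ) :=
        (ofReal_integral_eq_lintegral_ofReal (h_mul.sub h_conj) (.of_forall h_nonneg)).symm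
    _ ≤ ENNReal.ofReal a := by
        have h_smul : ∫ y, f y • (k y : ℝ) ∂μ = ∫ y, (k y : ℝ) ∂γ :=
          integral_rnDeriv_smul (hF.absolutelyContinuous_of_integral_le h)
        simp only [smul_eq_mul, mul_comm (f _)] at h_smul
        rw [integral_sub h_mul h_conj, h_smul]
        exact ENNReal.ofReal_le_ofReal
          (sub_le_iff_le_add.2 (hF.integral_le_add_integral_conj h hb hbM))

theorem Superlinear.entF_le_of_forall_integral_le (hF : F.Superlinear)
    (h : ∀ φ : Y →ᵇ ℝ, ∫ y, φ y ∂γ ≤ a + ∫ y, F.conj (φ y) ∂μ) : (entF F γ μ : EReal) ≤ a := by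
  have ha : 0 ≤ a := by
    have := h 0
    simp only [BoundedContinuousFunction.coe_zero, Pi.zero_apply, integral_zero, integral_const,
      smul_eq_mul] at this
    linarith [mul_nonpos_of_nonneg_of_nonpos (measureReal_nonneg (μ := μ) (s := univ))
      hF.conj_zero_nonpos]
  have hf : Measurable fun y ↦ (γ.rnDeriv μ y).toReal :=
    (Measure.measurable_rnDeriv γ μ).ennreal_toReal
  rw [← max_eq_left ha, ← EReal.coe_ennreal_ofReal, EReal.coe_ennreal_le_coe_ennreal_iff,
    F.entF_eq_lintegral (hF.absolutelyContinuous_of_integral_le h)]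
  rw [lintegral_congr fun y ↦ (hF.iSup_ofReal_mul_sub_conj ENNReal.toReal_nonneg).symm.trans
    (iSup_eq_iSup_finset _), lintegral_iSup_directed]
  · exact iSup_le fun T ↦ hF.lintegral_biSup_le_ofReal h T
  · exact fun T ↦ (Measurable.biSup _ T.countable_toSet fun q _ ↦
      ((hf.const_mul _).sub_const _).ennreal_ofReal).aemeasurable
  · exact Monotone.directed_le fun T T' hT y ↦ biSup_mono fun _ hq ↦ Finset.mem_of_subset hT hq

end Duality

end EntropyFn

/-! ### Jensen's inequality on the space of probability measures -/

/-- Integration of bounded continuous functions against a finite measure, as a linear form. -/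
def integralLinearMap {Y : Type*} [TopologicalSpace Y] [MeasurableSpace Y]
    [OpensMeasurableSpace Y] (μ : Measure Y) [IsFiniteMeasure μ] : (Y →ᵇ ℝ) →ₗ[ℝ] ℝ where
  toFun φ := ∫ y, φ y ∂μ
  map_add' φ ψ := integral_add (φ.integrable μ) (ψ.integrable μ)
  map_smul' r φ := integral_const_mul r φ

@[simp] lemma integralLinearMap_apply {Y : Type*} [TopologicalSpace Y] [MeasurableSpace Y]
    [OpensMeasurableSpace Y] (μ : Measure Y) [IsFiniteMeasure μ] (φ : Y →ᵇ ℝ) :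
    integralLinearMap μ φ = ∫ y, φ y ∂μ := rfl

lemma exists_probabilityMeasure_eq_combination {Y : Type*} [MeasurableSpace Y]
    (p q : ProbabilityMeasure Y) {s t : ℝ} (hs : 0 ≤ s) (ht : 0 ≤ t) (hst : s + t = 1) :
    ∃ m : ProbabilityMeasure Y,
      (m : Measure Y) = ENNReal.ofReal s • (p : Measure Y) + ENNReal.ofReal t • (q : Measure Y) :=
  ⟨⟨_, ⟨by simp [← ENNReal.ofReal_add hs ht, hst]⟩⟩, rfl⟩

section Jensen

variable {Y : Type*} [TopologicalSpace Y] [MeasurableSpace Y] [OpensMeasurableSpace Y]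

/-- The bounded continuous function `p ↦ ∫ φ dp` on `𝒫(Y)`, through which functions on `Y` are
tested against measures on `𝒫(Y)`. -/
def integralBCF (φ : Y →ᵇ ℝ) : ProbabilityMeasure Y →ᵇ ℝ :=
  .ofNormedAddCommGroup (fun p ↦ ∫ y, φ y ∂(p : Measure Y))
    (continuous_iff_continuousAt.2 fun _ ↦
      ProbabilityMeasure.tendsto_iff_forall_integral_tendsto.1 tendsto_id φ)
    ‖φ‖ fun _ ↦ φ.norm_integral_le_norm _

@[simp] lemma integralBCF_apply (φ : Y →ᵇ ℝ) (p : ProbabilityMeasure Y) :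
    integralBCF φ p = ∫ y, φ y ∂(p : Measure Y) := rfl

lemma integral_bind_evalKernel (Λ : Measure (ProbabilityMeasure Y)) [IsFiniteMeasure Λ]
    (φ : Y →ᵇ ℝ) : ∫ y, φ y ∂(Λ.bind (evalKernel Y)) = ∫ p, integralBCF φ p ∂Λ := by
  rw [← Measure.snd_compProd, Measure.snd, integral_map (by fun_prop)
    φ.continuous.aestronglyMeasurable, Measure.integral_compProd]
  · rfl
  · exact (φ.integrable _).comp_measurable measurable_snd

/-- Convexity of an extended-real function on `𝒫(Y)`. The convex combination is a separate
variable `m` because `ProbabilityMeasure Y` carries no convex structure. -/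
def IsConvexOnProb (c : ProbabilityMeasure Y → EReal) : Prop :=
  ∀ (p q m : ProbabilityMeasure Y) (t : ℝ), 0 ≤ t → t ≤ 1 →
    (m : Measure Y) =
      ENNReal.ofReal t • (p : Measure Y) + ENNReal.ofReal (1 - t) • (q : Measure Y) →
    c m ≤ (t : EReal) * c p + ((1 - t : ℝ) : EReal) * c q

lemma integral_ofReal_smul_add_ofReal_smul (μ ν : Measure Y) [IsFiniteMeasure μ]
    [IsFiniteMeasure ν] {s t : ℝ} (hs : 0 ≤ s) (ht : 0 ≤ t) (φ : Y →ᵇ ℝ) :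
    ∫ y, φ y ∂(ENNReal.ofReal s • μ + ENNReal.ofReal t • ν) =
      s * ∫ y, φ y ∂μ + t * ∫ y, φ y ∂ν := by
  rw [integral_add_measure ((φ.integrable μ).smul_measure (by simp))
    ((φ.integrable ν).smul_measure (by simp)), integral_smul_measure, integral_smul_measure,
    ENNReal.toReal_ofReal hs, ENNReal.toReal_ofReal ht, smul_eq_mul, smul_eq_mul]

lemma exists_separating_affine_of_lt {c : ProbabilityMeasure Y → EReal}
    (hc : LowerSemicontinuous c) (hc_conv : IsConvexOnProb c) {m : ProbabilityMeasure Y} {r : ℝ}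
    (hr : (r : EReal) < c m) :
    ∃ (φ : Y →ᵇ ℝ) (ρ u : ℝ), (∀ (p : ProbabilityMeasure Y) (s : ℝ), c p ≤ s →
      ∫ y, φ y ∂(p : Measure Y) + ρ * s < u) ∧ u < ∫ y, φ y ∂(m : Measure Y) + ρ * r := by
  let S : Set (ProbabilityMeasure Y × ℝ) := {e | c e.1 ≤ (e.2 : EReal)}
  have hS : IsClosed S := (lowerSemicontinuous_iff_isClosed_epigraph.1 hc).preimage
    (f := fun e : ProbabilityMeasure Y × ℝ ↦ (e.1, (e.2 : EReal)))
    (continuous_fst.prodMk (continuous_coe_real_ereal.comp continuous_snd))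
  let b (e : ProbabilityMeasure Y × ℝ) : (Y →ᵇ ℝ) × ℝ →ₗ[ℝ] ℝ :=
    (integralLinearMap (e.1 : Measure Y)).coprod (LinearMap.mulRight ℝ e.2)
  have hbS : Convex ℝ (b '' S) := by
    rintro _ ⟨e, he, rfl⟩ _ ⟨e', he', rfl⟩ s t hs ht hst
    obtain ⟨q, hq⟩ := exists_probabilityMeasure_eq_combination e.1 e'.1 hs ht hst
    obtain rfl : t = 1 - s := by linarith
    refine ⟨(q, s * e.2 + (1 - s) * e'.2), ?_, LinearMap.ext fun w ↦ ?_⟩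
    · refine (hc_conv e.1 e'.1 q s hs (by linarith) hq).trans ?_
      rw [EReal.coe_add, EReal.coe_mul, EReal.coe_mul]
      exact add_le_add (mul_le_mul_of_nonneg_left he (EReal.coe_nonneg.2 hs))
        (mul_le_mul_of_nonneg_left he' (EReal.coe_nonneg.2 ht))
    · change ∫ y, w.1 y ∂(q : Measure Y) + w.2 * _ =
        s * (∫ y, w.1 y ∂(e.1 : Measure Y) + w.2 * e.2) +
          (1 - s) * (∫ y, w.1 y ∂(e'.1 : Measure Y) + w.2 * e'.2)
      rw [hq, integral_ofReal_smul_add_ofReal_smul _ _ hs ht]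
      ring
  have hb (L : Filter (ProbabilityMeasure Y × ℝ))
      (hL : ∀ w, Tendsto (fun e ↦ b e w) L (𝓝 (b (m, r) w))) : L ≤ 𝓝 (m, r) := by
    have h_fst : Tendsto Prod.fst L (𝓝 m) :=
      ProbabilityMeasure.tendsto_iff_forall_integral_tendsto.2 fun φ ↦ by
        simpa [b] using hL (φ, 0)
    have h_snd : Tendsto Prod.snd L (𝓝 r) := by
      simpa [b] using hL (0, 1)
    exact h_fst.prodMk_nhds h_snd
  obtain ⟨w, u, hu, hu_lt⟩ := exists_lt_of_notMem_closure_of_convex_image b hb hbS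
    (by rw [hS.closure_eq]; exact hr.not_ge)
  exact ⟨w.1, w.2, u, fun p s hps ↦ hu (p, s) hps, hu_lt⟩

theorem IsConvexOnProb.le_eIntegral_of_barycenter [OpensMeasurableSpace (ProbabilityMeasure Y)]
    {c : ProbabilityMeasure Y → EReal} (hc_conv : IsConvexOnProb c) (hc : LowerSemicontinuous c)
    {K : ℝ} (hK : ∀ p, (K : EReal) ≤ c p) {Q : Measure (ProbabilityMeasure Y)}
    [IsProbabilityMeasure Q] {m : ProbabilityMeasure Y}
    (hm : ∀ φ : Y →ᵇ ℝ, ∫ y, φ y ∂(m : Measure Y) = ∫ p, integralBCF φ p ∂Q) :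
    c m ≤ eIntegral Q c := by
  rcases eq_or_ne (eIntegral Q c) ⊤ with h_top | h_top
  · exact h_top ▸ le_top
  obtain ⟨g, hg, hcg⟩ := exists_integrable_of_eIntegral_ne_top hc.measurable hK h_top
  rw [eIntegral_congr_ae hcg, eIntegral_coe hg]
  by_contra! h_lt
  obtain ⟨φ, ρ, u, hu, hu_lt⟩ := exists_separating_affine_of_lt hc hc_conv h_lt
  have hφ : Integrable (integralBCF φ) Q := (integralBCF φ).integrable Q
  have h_le : ∫ p, (integralBCF φ p + ρ * g p) ∂Q ≤ ∫ _, u ∂Q :=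
    integral_mono_ae (hφ.add (hg.const_mul ρ)) (integrable_const u)
      (hcg.mono fun p hp ↦ (hu p (g p) hp.le).le)
  rw [integral_add hφ (hg.const_mul ρ), integral_const_mul, ← hm, integral_const, probReal_univ,
    one_smul] at h_le
  exact hu_lt.not_ge h_le

end Jensen

/-! ### Transport plans from measures on `X₁ × 𝒫(X₂)` -/

instance nonempty_probabilityMeasure {X : Type*} [MeasurableSpace X] [Nonempty X] :
    Nonempty (ProbabilityMeasure X) :=
  ‹Nonempty X›.map fun x ↦ ⟨Measure.dirac x, inferInstance⟩

section BarycenterPlan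

open ProbabilityTheory

variable {X₁ X₂ : Type*} [MeasurableSpace X₁] [MeasurableSpace X₂]
  [StandardBorelSpace X₂] [Nonempty X₂] (Λ : Measure (X₁ × ProbabilityMeasure X₂))
  [IsFiniteMeasure Λ]

/-- The transport plan with the same first marginal as `Λ` whose disintegration at `x` is the
barycenter of the conditional law of `Λ` at `x`. -/
def barycenterPlan : Measure (X₁ × X₂) := Λ.fst ⊗ₘ (evalKernel X₂ ∘ₖ Λ.condKernel)

instance : IsFiniteMeasure (barycenterPlan Λ) := by unfold barycenterPlan; infer_instance

@[simp] lemma fst_barycenterPlan : (barycenterPlan Λ).fst = Λ.fst := Measure.fst_compProd _ _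

lemma snd_barycenterPlan : (barycenterPlan Λ).snd = Λ.snd.bind (evalKernel X₂) := by
  have h_snd : Λ.fst.bind Λ.condKernel = Λ.snd := by
    rw [← Measure.snd_compProd, Measure.disintegrate]
  rw [barycenterPlan, Measure.snd_compProd, ← Measure.comp_assoc, h_snd]

variable [TopologicalSpace X₂]

lemma integral_snd_barycenterPlan [OpensMeasurableSpace X₂] (φ : X₂ →ᵇ ℝ) :
    ∫ y, φ y ∂(barycenterPlan Λ).snd = ∫ p, integralBCF φ p ∂Λ.snd := by
  rw [snd_barycenterPlan, integral_bind_evalKernel]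

lemma eIntegral_condKernel_barycenterPlan_le [TopologicalSpace.MetrizableSpace X₂]
    [SecondCountableTopology X₂] [BorelSpace X₂] {C : X₁ → ProbabilityMeasure X₂ → EReal}
    (hC : Measurable fun q : X₁ × ProbabilityMeasure X₂ ↦ C q.1 q.2)
    (hC_lsc : ∀ x, LowerSemicontinuous (C x)) (hC_conv : ∀ x, IsConvexOnProb (C x))
    {K : ℝ} (hK : ∀ x p, (K : EReal) ≤ C x p) :
    eIntegral (barycenterPlan Λ).fst
        (fun x ↦ C x ⟨(barycenterPlan Λ).condKernel x, inferInstance⟩) ≤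
      eIntegral Λ fun q ↦ C q.1 q.2 := by
  have hJ : ∀ᵐ x ∂Λ.fst, (C x ⟨(barycenterPlan Λ).condKernel x, inferInstance⟩ - K).toENNReal ≤
      ∫⁻ p, (C x p - K).toENNReal ∂(Λ.condKernel x) := by
    filter_upwards [condKernel_compProd Λ.fst (evalKernel X₂ ∘ₖ Λ.condKernel)] with x hx
    have h_bary (φ : X₂ →ᵇ ℝ) : ∫ y, φ y ∂((barycenterPlan Λ).condKernel x) =
        ∫ p, integralBCF φ p ∂(Λ.condKernel x) := by
      refine (congrArg (fun ν ↦ ∫ y, φ y ∂ν) hx).trans ?_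
      exact Kernel.integral_comp (φ.integrable _)
    have h_le := (hC_conv x).le_eIntegral_of_barycenter (hC_lsc x) (hK x) (Q := Λ.condKernel x)
      (m := ⟨(barycenterPlan Λ).condKernel x, inferInstance⟩) h_bary
    rw [eIntegral_eq_lintegral_add (hC_lsc x).measurable (hK x), probReal_univ, one_mul] at h_le
    simpa only [EReal.add_sub_cancel_right, EReal.toENNReal_coe] using
      EReal.toENNReal_le_toENNReal (EReal.sub_le_sub h_le (le_refl (K : EReal)))
  have hC_cond : Measurable fun x ↦ C x ⟨(barycenterPlan Λ).condKernel x, inferInstance⟩ :=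
    hC.comp (measurable_id.prodMk (barycenterPlan Λ).condKernel.measurable.subtype_mk)
  rw [eIntegral_eq_lintegral_add hC_cond fun x ↦ hK x _,
    eIntegral_eq_lintegral_add hC fun q ↦ hK q.1 q.2, fst_barycenterPlan, measureReal_def,
    Measure.fst_univ, ← measureReal_def]
  gcongr
  rw [EReal.coe_ennreal_le_coe_ennreal_iff, ← Measure.lintegral_condKernel (by fun_prop)]
  exact lintegral_mono_ae hJ

end BarycenterPlan

/-! ### Feasible measures -/

lemma coe_ennreal_le_coe_iff {e : ℝ≥0∞} {a : ℝ} : (e : EReal) ≤ a ↔ e ≠ ∞ ∧ e.toReal ≤ a := by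
  rcases eq_or_ne e ∞ with rfl | he
  · simp
  · rw [← EReal.coe_ennreal_toReal he, EReal.coe_le_coe_iff]
    exact (and_iff_right he).symm

section Feasible

variable {X₁ X₂ : Type*} [TopologicalSpace X₁] [PolishSpace X₁] [MeasurableSpace X₁]
  [BorelSpace X₁] [TopologicalSpace X₂] [PolishSpace X₂] [MeasurableSpace X₂] [BorelSpace X₂]
  {C : X₁ → ProbabilityMeasure X₂ → EReal} {F₁ F₂ : EntropyFn} {ν₁ : Measure X₁} {ν₂ : Measure X₂}
  {t : ℝ} {Λ : Measure (X₁ × ProbabilityMeasure X₂)}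

/-- `Λ` witnesses that the primal value at `(ν₁, ν₂)` is at most `t`: the inequality
`ℱ₁(Λ₁|ν₁) + ℱ₂(barycenter of Λ₂|ν₂) + ∫ C dΛ ≤ t`, with each of the three terms replaced by its
dual representation. In this form the condition is visibly closed and convex in `(ν₁, ν₂, t, Λ)`. -/
def IsFeasible (C : X₁ → ProbabilityMeasure X₂ → EReal) (F₁ F₂ : EntropyFn) (ν₁ : Measure X₁)
    (ν₂ : Measure X₂) (t : ℝ) (Λ : Measure (X₁ × ProbabilityMeasure X₂)) : Prop :=
  ∀ (φ₁ : X₁ →ᵇ ℝ) (φ₂ : X₂ →ᵇ ℝ) (h : X₁ × ProbabilityMeasure X₂ →ᵇ ℝ),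
    (∀ q, (h q : EReal) ≤ C q.1 q.2) →
    ∫ x, φ₁ x ∂Λ.fst + ∫ p, integralBCF φ₂ p ∂Λ.snd + ∫ q, h q ∂Λ ≤
      t + ∫ x, F₁.conj (φ₁ x) ∂ν₁ + ∫ y, F₂.conj (φ₂ y) ∂ν₂

variable [IsFiniteMeasure ν₁] [IsFiniteMeasure ν₂] [IsFiniteMeasure Λ]

section Values

variable [Nonempty X₂] {K : ℝ}

lemma IsFeasible.exists_entF_eq (hΛ : IsFeasible C F₁ F₂ ν₁ ν₂ t Λ)
    (hK : ∀ x p, (K : EReal) ≤ C x p) (hF₁ : F₁.Superlinear) (hF₂ : F₂.Superlinear) :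
    ∃ e₁ e₂ : ℝ, (entF F₁ (barycenterPlan Λ).fst ν₁ : EReal) = e₁ ∧
      (entF F₂ (barycenterPlan Λ).snd ν₂ : EReal) = e₂ ∧
      ∀ h : X₁ × ProbabilityMeasure X₂ →ᵇ ℝ, (∀ q, (h q : EReal) ≤ C q.1 q.2) →
        ∫ q, h q ∂Λ ≤ t - e₁ - e₂ := by
  let k : X₁ × ProbabilityMeasure X₂ →ᵇ ℝ := .const _ K
  have hk (q : X₁ × ProbabilityMeasure X₂) : (k q : EReal) ≤ C q.1 q.2 := hK q.1 q.2
  set e₁ := (entF F₁ (barycenterPlan Λ).fst ν₁).toReal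
  set e₂ := (entF F₂ (barycenterPlan Λ).snd ν₂).toReal
  have h_ent₁ (φ₂ : X₂ →ᵇ ℝ) {h : X₁ × ProbabilityMeasure X₂ →ᵇ ℝ}
      (hh : ∀ q, (h q : EReal) ≤ C q.1 q.2) : _ ∧ e₁ ≤ _ :=
    coe_ennreal_le_coe_iff.1 <| hF₁.entF_le_of_forall_integral_le
      (a := t + ∫ y, F₂.conj (φ₂ y) ∂ν₂ - ∫ y, φ₂ y ∂(barycenterPlan Λ).snd - ∫ q, h q ∂Λ)
      fun φ₁ ↦ by
        rw [fst_barycenterPlan, integral_snd_barycenterPlan]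
        linarith [hΛ φ₁ φ₂ h hh]
  have h_ent₂ {h : X₁ × ProbabilityMeasure X₂ →ᵇ ℝ} (hh : ∀ q, (h q : EReal) ≤ C q.1 q.2) :
      _ ∧ e₂ ≤ _ :=
    coe_ennreal_le_coe_iff.1 <| hF₂.entF_le_of_forall_integral_le (a := t - e₁ - ∫ q, h q ∂Λ)
      fun φ₂ ↦ by linarith [(h_ent₁ φ₂ hh).2]
  exact ⟨e₁, e₂, (EReal.coe_ennreal_toReal (h_ent₁ 0 hk).1).symm,
    (EReal.coe_ennreal_toReal (h_ent₂ hk).1).symm, fun h hh ↦ by linarith [(h_ent₂ hh).2]⟩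

lemma IsFeasible.wOpt_le (hΛ : IsFeasible C F₁ F₂ ν₁ ν₂ t Λ)
    (hC : LowerSemicontinuous fun q : X₁ × ProbabilityMeasure X₂ ↦ C q.1 q.2)
    (hC_conv : ∀ x, IsConvexOnProb (C x)) (hK : ∀ x p, (K : EReal) ≤ C x p)
    (hF₁ : F₁.Superlinear) (hF₂ : F₂.Superlinear) : wOpt C F₁ F₂ ν₁ ν₂ ≤ t := by
  obtain ⟨e₁, e₂, he₁, he₂, h_cost⟩ := hΛ.exists_entF_eq hK hF₁ hF₂
  have hC_lsc (x : X₁) : LowerSemicontinuous (C x) :=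
    hC.comp (g := fun p ↦ (x, p)) (by fun_prop)
  calc wOpt C F₁ F₂ ν₁ ν₂ ≤ wCost C F₁ F₂ ν₁ ν₂ (barycenterPlan Λ) inferInstance :=
        sInf_le ⟨_, _, rfl⟩
    _ ≤ (e₁ : EReal) + e₂ + (t - e₁ - e₂ : ℝ) := by
        rw [wCost, he₁, he₂]
        gcongr
        exact (eIntegral_condKernel_barycenterPlan_le Λ hC.measurable hC_lsc hC_conv hK).trans
          (eIntegral_le_of_forall_integral_le hC (fun q ↦ hK q.1 q.2) h_cost)
    _ = t := by
        rw [← EReal.coe_add, ← EReal.coe_add]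
        congr 1
        ring

end Values

end Feasible

/-! ### Weak duality -/

lemma EntropyFn.Superlinear.eIntegral_circ_le {α : Type*} [MeasurableSpace α] {γ μ : Measure α}
    [IsFiniteMeasure γ] [IsFiniteMeasure μ] {F : EntropyFn} (hF : F.Superlinear) {u : α → EReal}
    (hu : Measurable u) {K : ℝ} (hK : ∀ x, (K : EReal) ≤ u x) :
    eIntegral μ (fun x ↦ F.circ (u x)) ≤ entF F γ μ + eIntegral γ u := by
  rw [eIntegral_eq_lintegral_add hu hK, ← add_assoc]
  by_cases h_ent : entF F γ μ = ∞
  · rw [h_ent, EReal.coe_ennreal_top, EReal.top_add_of_ne_bot (by simp), EReal.top_add_coe]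
    exact le_top
  have hγμ : γ ≪ μ := hF.absolutelyContinuous h_ent
  set f := γ.rnDeriv μ
  set g := fun x ↦ (u x - K).toENNReal
  have hf_meas : Measurable f := Measure.measurable_rnDeriv γ μ
  have hg_meas : Measurable g := by fun_prop
  have hFf_meas : Measurable fun x ↦ F.F (f x).toReal :=
    F.measurable_comp hf_meas.ennreal_toReal fun _ ↦ ENNReal.toReal_nonneg
  calc eIntegral μ (fun x ↦ F.circ (u x))
    _ ≤ eIntegral μ fun x ↦ ((F.F (f x).toReal + f x * g x : ℝ≥0∞) : EReal) +
          ((f x).toReal * K : ℝ) := by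
        refine eIntegral_mono_ae ?_
        filter_upwards [Measure.rnDeriv_lt_top γ μ] with x hx
        refine (iInf_le _ ⟨(f x).toReal, ENNReal.toReal_nonneg⟩).trans_eq ?_
        rw [← coe_toENNReal_sub_add (hK x), mul_comm, EReal.left_distrib_of_nonneg_of_ne_top
          (by simp [ENNReal.toReal_nonneg]) (EReal.coe_ne_top _), EReal.coe_ennreal_toReal hx.ne,
          EReal.coe_ennreal_add, EReal.coe_ennreal_mul, EReal.coe_mul,
          EReal.coe_ennreal_toReal hx.ne]
        abel
    _ = entF F γ μ + (∫⁻ x, g x ∂γ : ℝ≥0∞) + (γ.real univ * K : ℝ) := by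
        rw [eIntegral_coe_ennreal_add_coe (by fun_prop)
          (Measure.integrable_toReal_rnDeriv.mul_const K), lintegral_add_left hFf_meas,
          lintegral_rnDeriv_mul hγμ hg_meas.aemeasurable, integral_mul_const,
          Measure.integral_toReal_rnDeriv hγμ, F.entF_eq_lintegral hγμ, EReal.coe_ennreal_add]

lemma EntropyFn.circ_mono {F : EntropyFn} : Monotone F.circ := fun a b hab ↦
  iInf_mono fun s ↦ by
    have hs : (0 : EReal) ≤ (s : ℝ) := EReal.coe_nonneg.2 s.2
    gcongr

section WeakDuality

variable {X₁ X₂ : Type*} [MeasurableSpace X₁] [TopologicalSpace X₂] [MeasurableSpace X₂]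
  [StandardBorelSpace X₂] [Nonempty X₂]

lemma integral_integral_condKernel [OpensMeasurableSpace X₂] (γ : Measure (X₁ × X₂))
    [IsFiniteMeasure γ] (φ : X₂ →ᵇ ℝ) :
    ∫ x, ∫ y, φ y ∂(γ.condKernel x) ∂γ.fst = ∫ y, φ y ∂γ.snd := by
  have h_int : Integrable (fun q : X₁ × X₂ ↦ φ q.2) γ :=
    (φ.integrable γ.snd).comp_measurable measurable_snd
  rw [Measure.snd, integral_map (by fun_prop) φ.continuous.aestronglyMeasurable]
  exact Measure.integral_condKernel h_int

lemma eIntegral_circ_add_eIntegral_circ_le_wCost [TopologicalSpace.MetrizableSpace X₂]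
    [SecondCountableTopology X₂] [BorelSpace X₂]
    {C : X₁ → ProbabilityMeasure X₂ → EReal}
    (hC : Measurable fun q : X₁ × ProbabilityMeasure X₂ ↦ C q.1 q.2) {K : ℝ}
    (hK : ∀ x p, (K : EReal) ≤ C x p) {F₁ F₂ : EntropyFn} (hF₁ : F₁.Superlinear)
    (hF₂ : F₂.Superlinear) (μ₁ : Measure X₁) (μ₂ : Measure X₂) [IsFiniteMeasure μ₁]
    [IsFiniteMeasure μ₂] (γ : Measure (X₁ × X₂)) (hγ : IsFiniteMeasure γ) (φ : X₂ →ᵇ ℝ) :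
    eIntegral μ₁ (fun x ↦ F₁.circ (RCfun C φ x)) +
      eIntegral μ₂ (fun y ↦ F₂.circ ((-(φ y) : ℝ) : EReal)) ≤ wCost C F₁ F₂ μ₁ μ₂ γ hγ := by
  let π (x : X₁) : ProbabilityMeasure X₂ := ⟨γ.condKernel x, inferInstance⟩
  have hπ : Measurable π := γ.condKernel.measurable.subtype_mk
  have hCπ : Measurable fun x ↦ C x (π x) := hC.comp (measurable_id.prodMk hπ)
  let Φ (x : X₁) : ℝ := integralBCF φ (π x)
  have hΦ : Measurable Φ := (integralBCF φ).continuous.measurable.comp hπ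
  have hΦ_bdd (x : X₁) : |Φ x| ≤ ‖φ‖ := φ.norm_integral_le_norm _
  have hΦ_int : Integrable Φ γ.fst := .of_bound hΦ.aestronglyMeasurable _ (.of_forall hΦ_bdd)
  have hK_le (x : X₁) : ((K - ‖φ‖ : ℝ) : EReal) ≤ C x (π x) + Φ x := by
    rw [sub_eq_add_neg, EReal.coe_add]
    exact add_le_add (hK x _) (EReal.coe_le_coe_iff.2 (neg_le_of_abs_le (hΦ_bdd x)))
  have h_first : eIntegral μ₁ (fun x ↦ F₁.circ (RCfun C φ x)) ≤
      entF F₁ γ.fst μ₁ + (eIntegral γ.fst (fun x ↦ C x (π x)) + (∫ y, φ y ∂γ.snd : ℝ)) := by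
    rw [← integral_integral_condKernel]
    exact (eIntegral_mono_ae (.of_forall fun x ↦ EntropyFn.circ_mono (iInf_le _ (π x)))).trans <|
      (hF₁.eIntegral_circ_le (hCπ.add (by fun_prop)) hK_le).trans_eq
        (congrArg _ (eIntegral_add_coe hCπ (fun x ↦ hK x _) hΦ_int))
  have h_second : eIntegral μ₂ (fun y ↦ F₂.circ ((-(φ y) : ℝ) : EReal)) ≤
      entF F₂ γ.snd μ₂ + (-∫ y, φ y ∂γ.snd : ℝ) := by
    have h_int : Integrable (fun y ↦ -φ y) γ.snd := (φ.integrable _).neg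
    rw [← integral_neg, ← eIntegral_coe h_int]
    refine hF₂.eIntegral_circ_le (K := -‖φ‖) (by fun_prop) fun y ↦ EReal.coe_le_coe_iff.2 ?_
    exact neg_le_neg ((le_abs_self _).trans (φ.norm_coe_le_norm y))
  calc _ ≤ _ := add_le_add h_first h_second
    _ = entF F₁ γ.fst μ₁ + entF F₂ γ.snd μ₂ + eIntegral γ.fst (fun x ↦ C x (π x)) +
          ((∫ y, φ y ∂γ.snd : ℝ) + (-∫ y, φ y ∂γ.snd : ℝ) : EReal) := by abel
    _ = wCost C F₁ F₂ μ₁ μ₂ γ hγ := by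
        rw [← EReal.coe_add, add_neg_cancel, EReal.coe_zero, add_zero]
        rfl

end WeakDuality

/-! ### The cone of feasible triples -/

lemma EntropyFn.Superlinear.isTightMeasureSet_range {Y ι : Type*} [TopologicalSpace Y]
    [TopologicalSpace.MetrizableSpace Y] [MeasurableSpace Y] [BorelSpace Y] {F : EntropyFn}
    (hF : F.Superlinear) {γ μ : ι → Measure Y} [∀ i, IsFiniteMeasure (γ i)]
    [∀ i, IsFiniteMeasure (μ i)] {a : ℝ}
    (h : ∀ i, ∀ φ : Y →ᵇ ℝ, ∫ y, φ y ∂(γ i) ≤ a + ∫ y, F.conj (φ y) ∂(μ i))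
    (hμ : IsTightMeasureSet (range μ)) : IsTightMeasureSet (range γ) := by
  rw [isTightMeasureSet_iff_exists_isCompact_measure_compl_le] at hμ ⊢
  intro ε hε
  obtain ⟨r, hr, hrε⟩ := ENNReal.lt_iff_exists_nnreal_btwn.1 hε
  have hr₀ : (0 : ℝ) < r := by exact_mod_cast hr
  set M : ℝ := |a| / r + 1
  have hM : 0 < M := by positivity
  obtain ⟨δ, hδ, hδr⟩ := exists_pos_mul_lt hr₀ |F.conj M|
  obtain ⟨S, hS, hμS⟩ := hμ (ENNReal.ofReal δ) (by simpa using hδ)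
  refine ⟨S, hS, forall_mem_range.2 fun i ↦ le_trans ?_ hrε.le⟩
  have hμδ : (μ i).real Sᶜ ≤ δ := ENNReal.toReal_le_of_le_ofReal hδ.le (hμS _ (mem_range_self i))
  have hγ : M * (γ i).real Sᶜ ≤ M * r :=
    calc M * (γ i).real Sᶜ ≤ a + F.conj M * (μ i).real Sᶜ :=
          hF.mul_measureReal_le (h i) hS.isClosed.measurableSet.compl hM.le
      _ ≤ |a| + |F.conj M| * δ := by gcongr <;> exact le_abs_self _
      _ ≤ |a| + r := by gcongr
      _ = M * r := by rw [add_mul, div_mul_cancel₀ _ hr₀.ne', one_mul]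
  rw [← ofReal_measureReal, ← ENNReal.ofReal_coe_nnreal]
  exact ENNReal.ofReal_le_ofReal (le_of_mul_le_mul_left hγ hM)

lemma exists_boundedContinuous_eq_comp {Y : Type*} [TopologicalSpace Y] {φ : Y → ℝ}
    (hφ : Continuous φ) {s : Set ℝ} (hs : IsCompact s) (hφs : ∀ y, φ y ∈ s) {g : ℝ → ℝ}
    (hg : ContinuousOn g s) : ∃ ψ : Y →ᵇ ℝ, ∀ y, ψ y = g (φ y) := by
  obtain ⟨B, hB⟩ := hs.exists_bound_of_continuousOn hg
  exact ⟨.ofNormedAddCommGroup (fun y ↦ g (φ y)) (hg.comp_continuous hφ hφs) B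
    fun y ↦ hB _ (hφs y), fun _ ↦ rfl⟩

lemma EntropyFn.Superlinear.integrable_conj {Y : Type*} [TopologicalSpace Y] [MeasurableSpace Y]
    [OpensMeasurableSpace Y] {F : EntropyFn} (hF : F.Superlinear) {μ : Measure Y}
    [IsFiniteMeasure μ] (φ : Y →ᵇ ℝ) : Integrable (fun y ↦ F.conj (φ y)) μ :=
  integrable_comp_of_abs_le hF.continuous_conj φ.continuous.measurable φ.norm_coe_le_norm

lemma EntropyFn.Superlinear.tendsto_integral_conj {Y ι : Type*} [TopologicalSpace Y]
    [MeasurableSpace Y] [OpensMeasurableSpace Y] {F : EntropyFn} (hF : F.Superlinear)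
    {l : Filter ι} {μ : ι → FiniteMeasure Y} {μ₀ : FiniteMeasure Y} (hμ : Tendsto μ l (𝓝 μ₀))
    (φ : Y →ᵇ ℝ) :
    Tendsto (fun i ↦ ∫ y, F.conj (φ y) ∂(μ i : Measure Y)) l
      (𝓝 (∫ y, F.conj (φ y) ∂(μ₀ : Measure Y))) := by
  obtain ⟨ψ, hψ⟩ := exists_boundedContinuous_eq_comp φ.continuous
    (isCompact_closedBall 0 ‖φ‖) (fun y ↦ mem_closedBall_zero_iff.2 (φ.norm_coe_le_norm y))
    hF.continuous_conj.continuousOn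
  simpa only [hψ] using FiniteMeasure.tendsto_iff_forall_integral_tendsto.1 hμ ψ

section Feasible

variable {X₁ X₂ : Type*} [TopologicalSpace X₁] [MeasurableSpace X₁]
  [TopologicalSpace X₂] [MeasurableSpace X₂] [BorelSpace X₂]
  {C : X₁ → ProbabilityMeasure X₂ → EReal} {F₁ F₂ : EntropyFn} {K : ℝ}

section Bounds

variable {ν₁ : Measure X₁} {ν₂ : Measure X₂} {t : ℝ}
  {Λ : Measure (X₁ × ProbabilityMeasure X₂)}

lemma IsFeasible.integral_fst_add_le (hΛ : IsFeasible C F₁ F₂ ν₁ ν₂ t Λ)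
    (hK : ∀ x p, (K : EReal) ≤ C x p) (hF₂ : F₂.Superlinear) (φ : X₁ →ᵇ ℝ) :
    ∫ x, φ x ∂Λ.fst + K * Λ.real univ ≤ t + ∫ x, F₁.conj (φ x) ∂ν₁ := by
  have h := hΛ φ 0 (.const _ K) fun q ↦ hK q.1 q.2
  simp only [integralBCF_apply, BoundedContinuousFunction.coe_zero, Pi.zero_apply, integral_zero,
    BoundedContinuousFunction.const_apply, integral_const, smul_eq_mul, add_zero] at h
  linarith [mul_nonpos_of_nonneg_of_nonpos (measureReal_nonneg (μ := ν₂) (s := univ))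
    hF₂.conj_zero_nonpos]

lemma IsFeasible.integral_bind_snd_add_le [IsFiniteMeasure Λ]
    (hΛ : IsFeasible C F₁ F₂ ν₁ ν₂ t Λ) (hK : ∀ x p, (K : EReal) ≤ C x p)
    (hF₁ : F₁.Superlinear) (φ : X₂ →ᵇ ℝ) :
    ∫ y, φ y ∂(Λ.snd.bind (evalKernel X₂)) + K * Λ.real univ ≤
      t + ∫ y, F₂.conj (φ y) ∂ν₂ := by
  have h := hΛ 0 φ (.const _ K) fun q ↦ hK q.1 q.2
  rw [← integral_bind_evalKernel] at h
  simp only [BoundedContinuousFunction.coe_zero, Pi.zero_apply, integral_zero,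
    BoundedContinuousFunction.const_apply, integral_const, smul_eq_mul, zero_add] at h
  linarith [mul_nonpos_of_nonneg_of_nonpos (measureReal_nonneg (μ := ν₁) (s := univ))
    hF₁.conj_zero_nonpos]

lemma IsFeasible.measureReal_univ_le (hΛ : IsFeasible C F₁ F₂ ν₁ ν₂ t Λ)
    (hK : ∀ x p, (K : EReal) ≤ C x p) (hF₂ : F₂.Superlinear) :
    Λ.real univ ≤ t + F₁.conj (1 - K) * ν₁.real univ := by
  have h := hΛ.integral_fst_add_le hK hF₂ (.const _ (1 - K))
  simp only [BoundedContinuousFunction.const_apply, integral_const, smul_eq_mul,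
    measureReal_def, Measure.fst_univ] at h ⊢
  linarith

end Bounds

variable [BorelSpace X₁] [PolishSpace X₂]

section Sequences

lemma IsFeasible.of_tendsto {ι : Type*} {l : Filter ι} [l.NeBot] {ν₁ : ι → FiniteMeasure X₁}
    {ν₂ : ι → FiniteMeasure X₂} {t : ι → ℝ}
    {Λ : ι → FiniteMeasure (X₁ × ProbabilityMeasure X₂)} {ν₁₀ : FiniteMeasure X₁}
    {ν₂₀ : FiniteMeasure X₂} {t₀ : ℝ} {Λ₀ : FiniteMeasure (X₁ × ProbabilityMeasure X₂)}
    (hΛ : ∀ i, IsFeasible C F₁ F₂ (ν₁ i : Measure X₁) (ν₂ i : Measure X₂) (t i)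
      (Λ i : Measure (X₁ × ProbabilityMeasure X₂)))
    (hF₁ : F₁.Superlinear) (hF₂ : F₂.Superlinear)
    (h_ν₁ : Tendsto ν₁ l (𝓝 ν₁₀)) (h_ν₂ : Tendsto ν₂ l (𝓝 ν₂₀)) (h_t : Tendsto t l (𝓝 t₀))
    (h_Λ : Tendsto Λ l (𝓝 Λ₀)) :
    IsFeasible C F₁ F₂ (ν₁₀ : Measure X₁) (ν₂₀ : Measure X₂) t₀
      (Λ₀ : Measure (X₁ × ProbabilityMeasure X₂)) := by
  intro φ₁ φ₂ h hh
  have h_fst := FiniteMeasure.tendsto_map_of_tendsto_of_continuous _ _ h_Λ continuous_fst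
  have h_snd := FiniteMeasure.tendsto_map_of_tendsto_of_continuous _ _ h_Λ continuous_snd
  rw [FiniteMeasure.tendsto_iff_forall_integral_tendsto] at h_fst h_snd h_Λ
  exact le_of_tendsto_of_tendsto'
    (((h_fst φ₁).add (h_snd (integralBCF φ₂))).add (h_Λ h))
    ((h_t.add (hF₁.tendsto_integral_conj h_ν₁ φ₁)).add (hF₂.tendsto_integral_conj h_ν₂ φ₂))
    fun i ↦ hΛ i φ₁ φ₂ h hh

variable [PolishSpace X₁] {ν₁ : ℕ → FiniteMeasure X₁} {ν₂ : ℕ → FiniteMeasure X₂} {t : ℕ → ℝ}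
  {Λ : ℕ → FiniteMeasure (X₁ × ProbabilityMeasure X₂)} {ν₁₀ : FiniteMeasure X₁}
  {ν₂₀ : FiniteMeasure X₂} {t₀ : ℝ}

lemma IsFeasible.exists_subseq_tendsto
    (hΛ : ∀ n, IsFeasible C F₁ F₂ (ν₁ n : Measure X₁) (ν₂ n : Measure X₂) (t n)
      (Λ n : Measure (X₁ × ProbabilityMeasure X₂)))
    (hK : ∀ x p, (K : EReal) ≤ C x p) (hF₁ : F₁.Superlinear) (hF₂ : F₂.Superlinear)
    (h_ν₁ : Tendsto ν₁ atTop (𝓝 ν₁₀)) (h_ν₂ : Tendsto ν₂ atTop (𝓝 ν₂₀))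
    (h_t : Tendsto t atTop (𝓝 t₀)) :
    ∃ (Λ₀ : FiniteMeasure (X₁ × ProbabilityMeasure X₂)) (k : ℕ → ℕ),
      StrictMono k ∧ Tendsto (Λ ∘ k) atTop (𝓝 Λ₀) := by
  obtain ⟨T, hT⟩ := h_t.bddAbove_range
  obtain ⟨B, hB⟩ := (h_t.add ((NNReal.tendsto_coe.2
    ((FiniteMeasure.continuous_mass.tendsto _).comp h_ν₁)).const_mul
      (F₁.conj (1 - K)))).bddAbove_range
  have h_mass (n : ℕ) : (Λ n : Measure (X₁ × ProbabilityMeasure X₂)).real univ ≤ B :=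
    ((hΛ n).measureReal_univ_le hK hF₂).trans (hB (mem_range_self n))
  have h_const (n : ℕ) :
      t n - K * (Λ n : Measure (X₁ × ProbabilityMeasure X₂)).real univ ≤ T + |K| * B := by
    have := mul_le_mul_of_nonneg_left (h_mass n) (abs_nonneg K)
    have := mul_le_mul_of_nonneg_right (neg_le_abs K)
      (measureReal_nonneg (μ := (Λ n : Measure (X₁ × ProbabilityMeasure X₂))) (s := univ))
    linarith [hT (mem_range_self n)]
  have h_fst : IsTightMeasureSet
      (range fun n ↦ (Λ n : Measure (X₁ × ProbabilityMeasure X₂)).fst) :=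
    hF₁.isTightMeasureSet_range (a := T + |K| * B)
      (fun n φ ↦ by linarith [(hΛ n).integral_fst_add_le hK hF₂ φ, h_const n])
      (isTightMeasureSet_range_of_tendsto h_ν₁)
  have h_snd : IsTightMeasureSet (range fun n ↦
      (Λ n : Measure (X₁ × ProbabilityMeasure X₂)).snd.bind (evalKernel X₂)) :=
    hF₂.isTightMeasureSet_range (a := T + |K| * B)
      (fun n φ ↦ by linarith [(hΛ n).integral_bind_snd_add_le hK hF₁ φ, h_const n])
      (isTightMeasureSet_range_of_tendsto h_ν₂)
  refine exists_subseq_tendsto_of_isTightMeasureSet (B := B.toNNReal)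
    (fun n ↦ NNReal.le_toNNReal_of_coe_le (h_mass n)) (IsTightMeasureSet.prodMk ?_
      (isTightMeasureSet_of_isTightMeasureSet_barycenter ?_))
  · simpa only [← range_comp] using! h_fst
  · simpa only [← range_comp] using! h_snd

end Sequences

end Feasible

section FeasibleCone

variable {X₁ X₂ : Type*} [TopologicalSpace X₁] [MeasurableSpace X₁]
  [TopologicalSpace X₂] [MeasurableSpace X₂] [BorelSpace X₂]
  {C : X₁ → ProbabilityMeasure X₂ → EReal} {F₁ F₂ : EntropyFn}
  {ν₁ ν₁' : Measure X₁} {ν₂ ν₂' : Measure X₂} {t t' : ℝ}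
  {Λ Λ' : Measure (X₁ × ProbabilityMeasure X₂)}

lemma isFeasible_zero (ht : 0 ≤ t) : IsFeasible C F₁ F₂ 0 0 t 0 := fun φ₁ φ₂ h _ ↦ by
  simpa [Measure.fst, Measure.snd] using ht

lemma IsFeasible.smul (hΛ : IsFeasible C F₁ F₂ ν₁ ν₂ t Λ) (r : ℝ≥0) :
    IsFeasible C F₁ F₂ (r • ν₁) (r • ν₂) (r * t) (r • Λ) := fun φ₁ φ₂ h hh ↦ by
  rw [Measure.fst, Measure.snd, Measure.map_smul, Measure.map_smul]
  simp only [integral_smul_nnreal_measure, NNReal.smul_def, smul_eq_mul, ← mul_add]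
  exact mul_le_mul_of_nonneg_left (hΛ φ₁ φ₂ h hh) r.2

variable [BorelSpace X₁] [PolishSpace X₂]

lemma IsFeasible.add [IsFiniteMeasure ν₁] [IsFiniteMeasure ν₁'] [IsFiniteMeasure ν₂]
    [IsFiniteMeasure ν₂'] [IsFiniteMeasure Λ] [IsFiniteMeasure Λ']
    (hΛ : IsFeasible C F₁ F₂ ν₁ ν₂ t Λ) (hΛ' : IsFeasible C F₁ F₂ ν₁' ν₂' t' Λ')
    (hF₁ : F₁.Superlinear) (hF₂ : F₂.Superlinear) :
    IsFeasible C F₁ F₂ (ν₁ + ν₁') (ν₂ + ν₂') (t + t') (Λ + Λ') := fun φ₁ φ₂ h hh ↦ by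
  rw [Measure.fst_add, Measure.snd_add, integral_add_measure (φ₁.integrable _) (φ₁.integrable _),
    integral_add_measure ((integralBCF φ₂).integrable _) ((integralBCF φ₂).integrable _),
    integral_add_measure (h.integrable _) (h.integrable _),
    integral_add_measure (hF₁.integrable_conj φ₁) (hF₁.integrable_conj φ₁),
    integral_add_measure (hF₂.integrable_conj φ₂) (hF₂.integrable_conj φ₂)]
  linarith [hΛ φ₁ φ₂ h hh, hΛ' φ₁ φ₂ h hh]

/-- The convex cone of all triples `(ν₁, ν₂, t)` for which the primal problem at `(ν₁, ν₂)` has a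
competitor of value at most `t`. -/
def feasibleCone (C : X₁ → ProbabilityMeasure X₂ → EReal) (hF₁ : F₁.Superlinear)
    (hF₂ : F₂.Superlinear) : Submodule ℝ≥0 (FiniteMeasure X₁ × FiniteMeasure X₂ × ℝ) where
  carrier := {m | ∃ Λ : FiniteMeasure (X₁ × ProbabilityMeasure X₂), IsFeasible C F₁ F₂
    (m.1 : Measure X₁) (m.2.1 : Measure X₂) m.2.2 (Λ : Measure (X₁ × ProbabilityMeasure X₂))}
  zero_mem' := ⟨0, isFeasible_zero le_rfl⟩
  add_mem' := fun ⟨Λ, hΛ⟩ ⟨Λ', hΛ'⟩ ↦ ⟨Λ + Λ', hΛ.add hΛ' hF₁ hF₂⟩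
  smul_mem' := fun r _ ⟨Λ, hΛ⟩ ↦ ⟨r • Λ, hΛ.smul r⟩

lemma isClosed_feasibleCone [PolishSpace X₁] {K : ℝ} (hK : ∀ x p, (K : EReal) ≤ C x p)
    (hF₁ : F₁.Superlinear) (hF₂ : F₂.Superlinear) :
    IsClosed (feasibleCone C hF₁ hF₂ : Set (FiniteMeasure X₁ × FiniteMeasure X₂ × ℝ)) := by
  refine IsSeqClosed.isClosed fun m m₀ hm h_m ↦ ?_
  choose Λ hΛ using hm
  have h_ν₁ := (continuous_fst.tendsto _).comp h_m
  have h_ν₂ := ((continuous_fst.comp continuous_snd).tendsto _).comp h_m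
  have h_t := ((continuous_snd.comp continuous_snd).tendsto _).comp h_m
  obtain ⟨Λ₀, k, hk, h_Λ⟩ := IsFeasible.exists_subseq_tendsto hΛ hK hF₁ hF₂ h_ν₁ h_ν₂ h_t
  exact ⟨Λ₀, IsFeasible.of_tendsto (fun n ↦ hΛ (k n)) hF₁ hF₂ (h_ν₁.comp hk.tendsto_atTop)
    (h_ν₂.comp hk.tendsto_atTop) (h_t.comp hk.tendsto_atTop) h_Λ⟩

end FeasibleCone

/-! ### Separation of the feasible cone from infeasible triples -/

lemma exists_nonpos_pos_of_notMem_closure {M W : Type*} [TopologicalSpace M] [AddCommMonoid M]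
    [Module ℝ≥0 M] [AddCommGroup W] [Module ℝ W] (b : M →ₗ[ℝ≥0] W →ₗ[ℝ] ℝ) (S : Submodule ℝ≥0 M)
    {m : M} (hb : ∀ L : Filter M, (∀ w, Tendsto (fun k ↦ b k w) L (𝓝 (b m w))) → L ≤ 𝓝 m)
    (hm : m ∉ closure (S : Set M)) : ∃ w, (∀ k ∈ S, b k w ≤ 0) ∧ 0 < b m w := by
  have h_conv : Convex ℝ (b '' S) := fun x hx y hy s t hs ht _ ↦
    (S.map b).add_mem ((S.map b).smul_mem ⟨s, hs⟩ hx) ((S.map b).smul_mem ⟨t, ht⟩ hy)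
  obtain ⟨w, u, hu, hum⟩ := exists_lt_of_notMem_closure_of_convex_image b hb h_conv hm
  have hu₀ : 0 < u := by simpa using hu 0 S.zero_mem
  refine ⟨w, fun k hk ↦ le_of_not_gt fun hk₀ ↦ ?_, hu₀.trans hum⟩
  obtain ⟨n, hn⟩ := exists_lt_nsmul hk₀ u
  have := hu (n • k) (S.nsmul_mem hk n)
  rw [map_nsmul, LinearMap.smul_apply] at this
  exact this.not_gt hn

section Separation

variable {X₁ X₂ : Type*} [TopologicalSpace X₁] [MeasurableSpace X₁] [TopologicalSpace X₂]
  [MeasurableSpace X₂]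

section Pairing

variable [OpensMeasurableSpace X₁] [OpensMeasurableSpace X₂]

/-- The duality pairing of triples `(ν₁, ν₂, t)` with triples `(ψ₁, ψ₂, r)` of two bounded
continuous functions and a number. -/
def triplePairing :
    FiniteMeasure X₁ × FiniteMeasure X₂ × ℝ →ₗ[ℝ≥0] (X₁ →ᵇ ℝ) × (X₂ →ᵇ ℝ) × ℝ →ₗ[ℝ] ℝ where
  toFun m := (integralLinearMap (m.1 : Measure X₁)).coprod
    ((integralLinearMap (m.2.1 : Measure X₂)).coprod (m.2.2 • LinearMap.id))
  map_add' m m' := LinearMap.ext fun w ↦ by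
    simp only [Prod.fst_add, Prod.snd_add, FiniteMeasure.toMeasure_add, LinearMap.coprod_apply,
      LinearMap.add_apply, integralLinearMap_apply, LinearMap.smul_apply, LinearMap.id_apply,
      smul_eq_mul, integral_add_measure (w.1.integrable _) (w.1.integrable _),
      integral_add_measure (w.2.1.integrable _) (w.2.1.integrable _)]
    ring
  map_smul' r m := LinearMap.ext fun w ↦ by
    simp [integralLinearMap_apply]

lemma triplePairing_apply (m : FiniteMeasure X₁ × FiniteMeasure X₂ × ℝ)
    (w : (X₁ →ᵇ ℝ) × (X₂ →ᵇ ℝ) × ℝ) : triplePairing m w =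
      ∫ x, w.1 x ∂(m.1 : Measure X₁) + (∫ y, w.2.1 y ∂(m.2.1 : Measure X₂) + m.2.2 * w.2.2) :=
  rfl

lemma le_nhds_of_forall_tendsto_triplePairing {m : FiniteMeasure X₁ × FiniteMeasure X₂ × ℝ}
    {L : Filter (FiniteMeasure X₁ × FiniteMeasure X₂ × ℝ)}
    (hL : ∀ w, Tendsto (fun k ↦ triplePairing k w) L (𝓝 (triplePairing m w))) : L ≤ 𝓝 m := by
  have h₁ : Tendsto (fun k ↦ k.1) L (𝓝 m.1) :=
    FiniteMeasure.tendsto_iff_forall_integral_tendsto.2 fun φ ↦ by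
      simpa [triplePairing_apply] using hL (φ, 0, 0)
  have h₂ : Tendsto (fun k ↦ k.2.1) L (𝓝 m.2.1) :=
    FiniteMeasure.tendsto_iff_forall_integral_tendsto.2 fun φ ↦ by
      simpa [triplePairing_apply] using hL (0, φ, 0)
  have h₃ : Tendsto (fun k ↦ k.2.2) L (𝓝 m.2.2) := by
    simpa [triplePairing_apply] using hL (0, 0, 1)
  exact h₁.prodMk_nhds (h₂.prodMk_nhds h₃)

end Pairing

variable [BorelSpace X₁] [PolishSpace X₂] [BorelSpace X₂]
  {C : X₁ → ProbabilityMeasure X₂ → EReal} {F₁ F₂ : EntropyFn} {K : ℝ}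

/-- `ν₁, ν₂ ↦ ∫ ψ₁ ∂ν₁ + ∫ ψ₂ ∂ν₂` is a minorant of the primal value, expressed as a polarity
condition on the cone of feasible triples. Such pairs are what separation from the cone yields. -/
def IsLinearMinorant (C : X₁ → ProbabilityMeasure X₂ → EReal) (hF₁ : F₁.Superlinear)
    (hF₂ : F₂.Superlinear) (ψ₁ : X₁ →ᵇ ℝ) (ψ₂ : X₂ →ᵇ ℝ) : Prop :=
  ∀ m ∈ feasibleCone C hF₁ hF₂,
    ∫ x, ψ₁ x ∂(m.1 : Measure X₁) + ∫ y, ψ₂ y ∂(m.2.1 : Measure X₂) ≤ m.2.2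

lemma triplePairing_le_zero_of_mem_feasibleCone (hK : ∀ x p, (K : EReal) ≤ C x p)
    (hF₁ : F₁.Superlinear) (hF₂ : F₂.Superlinear)
    {m : FiniteMeasure X₁ × FiniteMeasure X₂ × ℝ} (hm : m ∈ feasibleCone C hF₁ hF₂) :
    triplePairing m (.const _ (-F₁.conj (-K)), 0, -1) ≤ 0 := by
  obtain ⟨Λ, hΛ⟩ := hm
  have h := hΛ.integral_fst_add_le hK hF₂ (.const _ (-K))
  simp only [triplePairing_apply, BoundedContinuousFunction.const_apply, integral_const,
    smul_eq_mul, measureReal_def, Measure.fst_univ, BoundedContinuousFunction.coe_zero,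
    Pi.zero_apply, mul_zero] at h ⊢
  linarith

theorem exists_isLinearMinorant_of_lt_wOpt [PolishSpace X₁] [Nonempty X₂]
    (hC : LowerSemicontinuous fun q : X₁ × ProbabilityMeasure X₂ ↦ C q.1 q.2)
    (hC_conv : ∀ x, IsConvexOnProb (C x)) (hK : ∀ x p, (K : EReal) ≤ C x p)
    (hF₁ : F₁.Superlinear) (hF₂ : F₂.Superlinear) {μ₁ : Measure X₁} {μ₂ : Measure X₂}
    [IsFiniteMeasure μ₁] [IsFiniteMeasure μ₂] {a : ℝ} (ha : (a : EReal) < wOpt C F₁ F₂ μ₁ μ₂) :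
    ∃ ψ₁ ψ₂, IsLinearMinorant C hF₁ hF₂ ψ₁ ψ₂ ∧ a < ∫ x, ψ₁ x ∂μ₁ + ∫ y, ψ₂ y ∂μ₂ := by
  set m : FiniteMeasure X₁ × FiniteMeasure X₂ × ℝ := (⟨μ₁, ‹_›⟩, ⟨μ₂, ‹_›⟩, a)
  have hm : m ∉ closure
      (feasibleCone C hF₁ hF₂ : Set (FiniteMeasure X₁ × FiniteMeasure X₂ × ℝ)) := by
    rw [(isClosed_feasibleCone hK hF₁ hF₂).closure_eq]
    rintro ⟨Λ, hΛ⟩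
    exact ha.not_ge (hΛ.wOpt_le hC hC_conv hK hF₁ hF₂)
  obtain ⟨w, hw, hwm⟩ := exists_nonpos_pos_of_notMem_closure triplePairing _
    (fun L ↦ le_nhds_of_forall_tendsto_triplePairing) hm
  -- `w` may have last coordinate `0`; adding a small multiple of `w₀` makes it negative.
  set w₀ : (X₁ →ᵇ ℝ) × (X₂ →ᵇ ℝ) × ℝ := (.const _ (-F₁.conj (-K)), 0, -1)
  obtain ⟨ε, hε, hεm⟩ := exists_pos_mul_lt hwm (-triplePairing m w₀)
  have hw_last : w.2.2 ≤ 0 := by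
    simpa [triplePairing_apply] using hw (0, 0, 1) ⟨0, isFeasible_zero zero_le_one⟩
  have hr : 0 < (ε - w.2.2)⁻¹ := by rw [inv_pos]; linarith
  set v := (ε - w.2.2)⁻¹ • (w + ε • w₀)
  have hv (k) : triplePairing k v =
      (ε - w.2.2)⁻¹ * (triplePairing k w + ε * triplePairing k w₀) := by
    simp only [v, map_smul, map_add, smul_eq_mul]
  have hv_last : v.2.2 = -1 := by
    simp only [v, w₀, Prod.smul_snd, Prod.snd_add, smul_eq_mul]
    rw [inv_mul_eq_iff_eq_mul₀ (inv_pos.1 hr).ne']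
    ring
  have h_apply (k) : triplePairing k v =
      ∫ x, v.1 x ∂(k.1 : Measure X₁) + ∫ y, v.2.1 y ∂(k.2.1 : Measure X₂) - k.2.2 := by
    rw [triplePairing_apply, hv_last]
    ring
  refine ⟨v.1, v.2.1, fun k hk ↦ ?_, ?_⟩
  · refine sub_nonpos.1 ((h_apply k).symm.trans_le ?_)
    rw [hv]
    exact mul_nonpos_of_nonneg_of_nonpos hr.le (add_nonpos (hw k hk) (mul_nonpos_of_nonneg_of_nonpos
      hε.le (triplePairing_le_zero_of_mem_feasibleCone hK hF₁ hF₂ hk)))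
  · refine sub_pos.1 (lt_of_lt_of_eq ?_ (h_apply m))
    rw [hv]
    exact mul_pos hr (by linarith)

end Separation

/-! ### The inverse of the conjugate -/

lemma exists_monotoneOn_subgradient {f : ℝ → ℝ} {S : Set ℝ} (hf : ConvexOn ℝ S f) :
    ∃ σ : ℝ → ℝ, MonotoneOn σ (interior S) ∧
      ∀ x ∈ interior S, ∀ y ∈ S, f x + σ x * (y - x) ≤ f y := by
  refine ⟨fun x ↦ derivWithin f (Ioi x) x, hf.monotoneOn_rightDeriv, fun x hx y hy ↦ ?_⟩
  rcases lt_trichotomy y x with hyx | rfl | hxy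
  · have h := (hf.slope_le_leftDeriv_of_mem_interior hy hx hyx).trans
      (hf.leftDeriv_le_rightDeriv_of_mem_interior hx)
    rw [slope_def_field, div_le_iff₀ (sub_pos.2 hyx)] at h
    linarith
  · simp
  · have h := hf.rightDeriv_le_slope_of_mem_interior hx hy hxy
    rw [slope_def_field, le_div_iff₀ (sub_pos.2 hxy)] at h
    linarith

lemma exists_antitoneOn_supergradient {f : ℝ → ℝ} {S : Set ℝ} (hf : ConcaveOn ℝ S f) :
    ∃ σ : ℝ → ℝ, AntitoneOn σ (interior S) ∧
      ∀ x ∈ interior S, ∀ y ∈ S, f y ≤ f x + σ x * (y - x) := by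
  obtain ⟨σ, hσ, h_sub⟩ := exists_monotoneOn_subgradient hf.neg
  refine ⟨-σ, hσ.neg, fun x hx y hy ↦ ?_⟩
  have h := h_sub x hx y hy
  simp only [Pi.neg_apply] at h ⊢
  linarith

namespace EntropyFn

variable {F : EntropyFn}

/-- The generalized inverse of the conjugate `F.conj`. In terms of the conjugate `R*` of the reverse
function of `F` it is `v ↦ -R*(-v)`. -/
def conjInv (F : EntropyFn) (v : ℝ) : ℝ := sSup {m | F.conj m ≤ v}

lemma Superlinear.bddAbove_conj_le (hF : F.Superlinear) (v : ℝ) : BddAbove {m | F.conj m ≤ v} := by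
  obtain ⟨s, hs, hFs⟩ := F.dom
  refine ⟨(v + (F.F s).toReal) / s, fun m hm ↦ (le_div_iff₀ hs).2 ?_⟩
  linarith [(ofReal_le_iff hFs).1 (hF.conj_le_iff.1 hm s hs.le)]

lemma Superlinear.le_conjInv (hF : F.Superlinear) {m v : ℝ} (hm : F.conj m ≤ v) :
    m ≤ F.conjInv v :=
  le_csSup (hF.bddAbove_conj_le v) hm

lemma Superlinear.conj_conjInv_le (hF : F.Superlinear) {v : ℝ} (hv : ∃ m, F.conj m ≤ v) :
    F.conj (F.conjInv v) ≤ v :=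
  (isClosed_le hF.continuous_conj continuous_const).csSup_mem hv (hF.bddAbove_conj_le v)

lemma Superlinear.concaveOn_conjInv (hF : F.Superlinear) :
    ConcaveOn ℝ {v | ∃ m, F.conj m ≤ v} F.conjInv := by
  have h_conj {v v' t t' : ℝ} (hv : ∃ m, F.conj m ≤ v) (hv' : ∃ m, F.conj m ≤ v') (ht : 0 ≤ t)
      (ht' : 0 ≤ t') (htt : t + t' = 1) :
      F.conj (t • F.conjInv v + t' • F.conjInv v') ≤ t • v + t' • v' :=
    (hF.convexOn_conj.2 trivial trivial ht ht' htt).trans (by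
      gcongr
      exacts [hF.conj_conjInv_le hv, hF.conj_conjInv_le hv'])
  exact ⟨fun v hv v' hv' t t' ht ht' htt ↦ ⟨_, h_conj hv hv' ht ht' htt⟩,
    fun v hv v' hv' t t' ht ht' htt ↦ hF.le_conjInv (h_conj hv hv' ht ht' htt)⟩

lemma Superlinear.exists_conj_lt (hF : F.Superlinear) {r ε : ℝ} (hr : ENNReal.ofReal r ≤ F.F 0)
    (hε : 0 < ε) : ∃ m, F.conj m < ε - r := by
  rcases le_or_gt r 0 with hr₀ | hr₀
  · exact ⟨0, hF.conj_zero_nonpos.trans_lt (by linarith)⟩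
  · have h_lt : ENNReal.ofReal (r - ε) < F.F 0 :=
      ((ENNReal.ofReal_lt_ofReal_iff hr₀).2 (sub_lt_self r hε)).trans_le hr
    obtain ⟨m, hm⟩ := hF.exists_lt_ofReal_mul_sub_conj h_lt
    exact ⟨m, by linarith [(ENNReal.ofReal_lt_ofReal_iff').1 hm]⟩

lemma Superlinear.exists_boundedContinuous_supergradient {Y : Type*} [TopologicalSpace Y]
    [MeasurableSpace Y] [OpensMeasurableSpace Y] (hF : F.Superlinear) (v : Y →ᵇ ℝ) {m₀ b : ℝ}
    (hm₀ : F.conj m₀ < b) (hb : ∀ y, b ≤ v y) :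
    ∃ (φ : Y →ᵇ ℝ) (σ : Y → ℝ≥0) (B : ℝ≥0), Measurable σ ∧ (∀ y, σ y ≤ B) ∧
      (∀ y, F.conj (φ y) ≤ v y) ∧ ∀ y m, m ≤ φ y + σ y * (F.conj m - v y) := by
  set S := {w | ∃ m, F.conj m ≤ w}
  have hS {w : ℝ} (hw : b ≤ w) : w ∈ interior S :=
    mem_interior.2 ⟨Ioi (F.conj m₀), fun _ hu ↦ ⟨m₀, le_of_lt hu⟩, isOpen_Ioi, hm₀.trans_le hw⟩
  have hvS (y : Y) : v y ∈ interior S := hS (hb y)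
  have h_conj (y : Y) : F.conj (F.conjInv (v y)) ≤ v y :=
    hF.conj_conjInv_le (interior_subset (hvS y) :)
  obtain ⟨φ, hφ⟩ := exists_boundedContinuous_eq_comp v.continuous isCompact_Icc
    (fun y ↦ ⟨hb y, (le_abs_self _).trans (v.norm_coe_le_norm y)⟩)
    (hF.concaveOn_conjInv.continuousOn_interior.mono fun w hw ↦ hS hw.1)
  obtain ⟨σ, hσ, h_super⟩ := exists_antitoneOn_supergradient hF.concaveOn_conjInv
  have hσ₀ (y : Y) : 0 ≤ σ (v y) := by
    have h := h_super (v y) (hvS y) (v y + 1) ⟨_, (h_conj y).trans (by linarith)⟩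
    have h_mono := hF.le_conjInv ((h_conj y).trans (le_add_of_nonneg_right zero_le_one))
    linarith
  have hσ_anti : Antitone fun w ↦ σ (max b w) := fun w w' hw ↦
    hσ (hS (le_max_left _ _)) (hS (le_max_left _ _)) (max_le_max_left b hw)
  refine ⟨φ, fun y ↦ (σ (v y)).toNNReal, (σ b).toNNReal, Measurable.real_toNNReal ?_,
    fun y ↦ Real.toNNReal_le_toNNReal (hσ (hS le_rfl) (hvS y) (hb y)),
    fun y ↦ hφ y ▸ h_conj y, fun y m ↦ ?_⟩
  · simpa only [Function.comp_def, max_eq_right (hb _)] using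
      hσ_anti.measurable.comp v.continuous.measurable
  · rw [Real.coe_toNNReal _ (hσ₀ y), hφ y]
    exact (hF.le_conjInv le_rfl).trans (h_super _ (hvS y) _ ⟨m, le_rfl⟩)

end EntropyFn

/-! ### Strong duality -/

lemma EntropyFn.Superlinear.neg_le_circ {F : EntropyFn} (hF : F.Superlinear) {r v : ℝ}
    (h : F.conj r ≤ v) : ((-v : ℝ) : EReal) ≤ F.circ ((-r : ℝ) : EReal) := by
  refine le_iInf fun ⟨s, hs⟩ ↦ ?_
  rw [← EReal.coe_mul]
  by_cases hFs : F.F s = ∞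
  · rw [hFs, EReal.coe_ennreal_top, EReal.coe_add_top]
    exact le_top
  · rw [← EReal.coe_ennreal_toReal hFs]
    have h := (EntropyFn.ofReal_le_iff hFs).1 (hF.conj_le_iff.1 h s hs)
    norm_cast
    linarith

lemma EntropyFn.coe_le_circ {F : EntropyFn} {a K : ℝ} {u : EReal} (hu : (K : EReal) ≤ u)
    (h₀ : ENNReal.ofReal a ≤ F.F 0)
    (h : ∀ θ : ℝ≥0, θ ≠ 0 → F.F θ ≠ ∞ → (((a - (F.F θ).toReal) / θ : ℝ) : EReal) ≤ u) :
    (a : EReal) ≤ F.circ u := by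
  suffices h_le : ∀ s : ℝ≥0, (a : EReal) ≤ u * (s : ℝ) + F.F s from
    le_iInf fun s ↦ h_le ⟨s, s.2⟩
  intro s
  have h_mul {r : ℝ} (hr : (r : EReal) ≤ u) : ((r * s : ℝ) : EReal) ≤ u * (s : ℝ) := by
    rw [EReal.coe_mul]
    exact mul_le_mul_of_nonneg_right hr (EReal.coe_nonneg.2 s.2)
  by_cases hFs : F.F s = ∞
  · have h_bot : u * (s : ℝ) ≠ ⊥ := ((EReal.bot_lt_coe _).trans_le (h_mul hu)).ne'
    rw [hFs, EReal.coe_ennreal_top, EReal.add_top_of_ne_bot h_bot]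
    exact le_top
  rcases eq_or_ne s 0 with rfl | hs₀
  · rw [← EReal.coe_ennreal_toReal hFs, NNReal.coe_zero, EReal.coe_zero, mul_zero, zero_add]
    exact EReal.coe_le_coe_iff.2 ((EntropyFn.ofReal_le_iff hFs).1 h₀)
  · have h_le := add_le_add_left (h_mul (h s hs₀ hFs)) ((F.F s).toReal : EReal)
    rwa [div_mul_cancel₀ _ (NNReal.coe_ne_zero.2 hs₀), ← EReal.coe_add, sub_add_cancel,
      EReal.coe_ennreal_toReal hFs] at h_le

lemma coe_le_RCfun {X₁ X₂ : Type*} [MeasurableSpace X₂] [TopologicalSpace X₂]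
    {C : X₁ → ProbabilityMeasure X₂ → EReal} {x : X₁} {K r : ℝ} {φ : X₂ →ᵇ ℝ}
    (hK : ∀ p, (K : EReal) ≤ C x p)
    (hr : ∀ (p : ProbabilityMeasure X₂) (c : ℝ), C x p = c → K ≤ c →
      r ≤ c + ∫ y, φ y ∂(p : Measure X₂)) : (r : EReal) ≤ RCfun C φ x := by
  refine le_iInf fun p ↦ ?_
  have hKp := hK p
  by_cases h_top : C x p = ⊤
  · simp [h_top]
  lift C x p to ℝ using ⟨h_top, ((EReal.bot_lt_coe K).trans_le hKp).ne'⟩ with c hc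
  exact_mod_cast hr p c hc.symm (EReal.coe_le_coe_iff.1 hKp)

section StrongDuality

variable {X₁ X₂ : Type*} [TopologicalSpace X₁] [MeasurableSpace X₁] [BorelSpace X₁]
  [TopologicalSpace X₂] [PolishSpace X₂] [MeasurableSpace X₂] [BorelSpace X₂]
  {C : X₁ → ProbabilityMeasure X₂ → EReal} {F₁ F₂ : EntropyFn}
  {hF₁ : F₁.Superlinear} {hF₂ : F₂.Superlinear} {ψ₁ : X₁ →ᵇ ℝ} {ψ₂ : X₂ →ᵇ ℝ}

lemma IsLinearMinorant.ofReal_snd_le (hψ : IsLinearMinorant C hF₁ hF₂ ψ₁ ψ₂) (y : X₂) :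
    ENNReal.ofReal (ψ₂ y) ≤ F₂.F 0 := by
  by_cases hF₀ : F₂.F 0 = ∞
  · exact hF₀ ▸ le_top
  have h_feas : IsFeasible C F₁ F₂ 0 (Measure.dirac y) (F₂.F 0).toReal 0 := fun φ₁ φ₂ h _ ↦ by
    have h₀ := (EntropyFn.ofReal_le_iff hF₀).1 (hF₂.ofReal_mul_sub_conj_le (φ₂ y) le_rfl)
    simpa [Measure.fst, Measure.snd, neg_le_iff_add_nonneg] using h₀
  rw [EntropyFn.ofReal_le_iff hF₀]
  simpa using hψ (0, ⟨Measure.dirac y, inferInstance⟩, (F₂.F 0).toReal) ⟨0, h_feas⟩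

variable [PolishSpace X₁]

lemma IsLinearMinorant.ofReal_fst_le (hψ : IsLinearMinorant C hF₁ hF₂ ψ₁ ψ₂) (x : X₁) :
    ENNReal.ofReal (ψ₁ x) ≤ F₁.F 0 := by
  by_cases hF₀ : F₁.F 0 = ∞
  · exact hF₀ ▸ le_top
  have h_feas : IsFeasible C F₁ F₂ (Measure.dirac x) 0 (F₁.F 0).toReal 0 := fun φ₁ φ₂ h _ ↦ by
    have h₀ := (EntropyFn.ofReal_le_iff hF₀).1 (hF₁.ofReal_mul_sub_conj_le (φ₁ x) le_rfl)
    simpa [Measure.fst, Measure.snd, neg_le_iff_add_nonneg] using h₀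
  rw [EntropyFn.ofReal_le_iff hF₀]
  simpa using hψ (⟨Measure.dirac x, inferInstance⟩, 0, (F₁.F 0).toReal) ⟨0, h_feas⟩

section Dirac

variable {x : X₁} {p : ProbabilityMeasure X₂} {c : ℝ} {θ : ℝ≥0} {v φ : X₂ →ᵇ ℝ} {σ : X₂ → ℝ≥0}

lemma isFeasible_dirac (hF₁ : F₁.Superlinear) (hF₂ : F₂.Superlinear) (hc : C x p = c) (hθ : θ ≠ 0)
    (hFθ : F₁.F θ ≠ ∞) (hσ : Measurable σ)
    [IsFiniteMeasure ((p : Measure X₂).withDensity fun y ↦ (σ y : ℝ≥0∞))]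
    (hφ : ∀ y m, m ≤ φ y + σ y * (F₂.conj m - v y)) :
    IsFeasible C F₁ F₂ (θ⁻¹ • Measure.dirac x) ((p : Measure X₂).withDensity fun y ↦ (σ y : ℝ≥0∞))
      (θ⁻¹ * (F₁.F θ).toReal + c + ∫ y, φ y ∂(p : Measure X₂) -
        ∫ y, v y ∂((p : Measure X₂).withDensity fun y ↦ (σ y : ℝ≥0∞)))
      (Measure.dirac (x, p)) := fun φ₁ φ₂ h hh ↦ by
  set ν : Measure X₂ := (p : Measure X₂).withDensity fun y ↦ (σ y : ℝ≥0∞) with hν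
  have h_fst : φ₁ x ≤ (θ : ℝ)⁻¹ * ((F₁.F θ).toReal + F₁.conj (φ₁ x)) := by
    rw [le_inv_mul_iff₀' (by positivity)]
    linarith [(EntropyFn.ofReal_le_iff hFθ).1 (hF₁.ofReal_mul_sub_conj_le (φ₁ x) θ.2)]
  have h_snd : ∫ y, φ₂ y ∂(p : Measure X₂) ≤
      ∫ y, φ y ∂(p : Measure X₂) + (∫ y, F₂.conj (φ₂ y) ∂ν - ∫ y, v y ∂ν) := by
    have h_int : Integrable (fun y ↦ F₂.conj (φ₂ y) - v y) ν :=
      (hF₂.integrable_conj φ₂).sub (v.integrable ν)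
    have h_int_smul := (integrable_withDensity_iff_integrable_smul hσ).1 h_int
    rw [← integral_sub (hF₂.integrable_conj φ₂) (v.integrable ν), hν,
      integral_withDensity_eq_integral_smul hσ, ← integral_add (φ.integrable _) h_int_smul]
    exact integral_mono (φ₂.integrable _) ((φ.integrable _).add h_int_smul) fun y ↦ hφ y _
  have h_cost : h (x, p) ≤ c := EReal.coe_le_coe_iff.1 (hc ▸ hh (x, p))
  rw [Measure.fst, Measure.snd, Measure.map_dirac' measurable_fst,
    Measure.map_dirac' measurable_snd, integral_dirac, integral_dirac, integral_dirac,
    integral_smul_nnreal_measure, integral_dirac, integralBCF_apply, NNReal.smul_def,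
    NNReal.coe_inv, smul_eq_mul]
  linarith

lemma IsLinearMinorant.fst_le_add (hψ : IsLinearMinorant C hF₁ hF₂ ψ₁ ψ₂)
    (hc : C x p = c) (hθ : θ ≠ 0) (hFθ : F₁.F θ ≠ ∞) (hσ : Measurable σ) {B : ℝ≥0}
    (hσB : ∀ y, σ y ≤ B) (hφ : ∀ y m, m ≤ φ y + σ y * (F₂.conj m - v y)) (hv : ∀ y, -v y ≤ ψ₂ y) :
    ψ₁ x ≤ (F₁.F θ).toReal + θ * (c + ∫ y, φ y ∂(p : Measure X₂)) := by
  set ν : Measure X₂ := (p : Measure X₂).withDensity fun y ↦ (σ y : ℝ≥0∞)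
  have : IsFiniteMeasure ν := isFiniteMeasure_withDensity
    (IsFiniteMeasure.lintegral_lt_top_of_bounded_to_ennreal _
      ⟨B, fun y ↦ ENNReal.coe_le_coe.2 (hσB y)⟩).ne
  have hvψ : -∫ y, v y ∂ν ≤ ∫ y, ψ₂ y ∂ν := by
    rw [← integral_neg]
    exact integral_mono (v.integrable ν).neg (ψ₂.integrable ν) hv
  set t := (θ : ℝ)⁻¹ * (F₁.F θ).toReal + c + ∫ y, φ y ∂(p : Measure X₂) - ∫ y, v y ∂ν
  let δ : FiniteMeasure X₁ := ⟨Measure.dirac x, inferInstance⟩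
  have h_feas : IsFeasible C F₁ F₂ (θ⁻¹ • Measure.dirac x) ν t (Measure.dirac (x, p)) :=
    isFeasible_dirac hF₁ hF₂ hc hθ hFθ hσ hφ
  have h_le : ∫ x', ψ₁ x' ∂(θ⁻¹ • Measure.dirac x) + ∫ y, ψ₂ y ∂ν ≤ t :=
    hψ (θ⁻¹ • δ, ⟨ν, this⟩, t) ⟨⟨Measure.dirac (x, p), inferInstance⟩, h_feas⟩
  rw [integral_smul_nnreal_measure, integral_dirac, NNReal.smul_def, NNReal.coe_inv,
    smul_eq_mul] at h_le
  have h_inv : (θ : ℝ)⁻¹ * (ψ₁ x - (F₁.F θ).toReal) ≤ c + ∫ y, φ y ∂(p : Measure X₂) := by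
    linarith
  linarith [(inv_mul_le_iff₀ (by positivity)).1 h_inv]

lemma IsLinearMinorant.coe_le_circ_RCfun (hψ : IsLinearMinorant C hF₁ hF₂ ψ₁ ψ₂)
    {K : ℝ} (hK : ∀ x p, (K : EReal) ≤ C x p) (hσ : Measurable σ) {B : ℝ≥0} (hσB : ∀ y, σ y ≤ B)
    (hφ : ∀ y m, m ≤ φ y + σ y * (F₂.conj m - v y)) (hv : ∀ y, -v y ≤ ψ₂ y) (x : X₁) :
    (ψ₁ x : EReal) ≤ F₁.circ (RCfun C φ x) := by
  have hK_le : ((K - ‖φ‖ : ℝ) : EReal) ≤ RCfun C φ x := coe_le_RCfun (hK x) fun p c _ hKc ↦ by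
    linarith [neg_le_of_abs_le (φ.norm_integral_le_norm (p : Measure X₂))]
  refine EntropyFn.coe_le_circ hK_le (hψ.ofReal_fst_le x)
    fun θ hθ hFθ ↦ coe_le_RCfun (hK x) fun p c hc _ ↦ ?_
  have h_le := hψ.fst_le_add hc hθ hFθ hσ hσB hφ hv
  rw [div_le_iff₀' (by positivity)]
  linarith

end Dirac

lemma exists_coe_le_eIntegral_circ_add [Nonempty X₂]
    (hC : LowerSemicontinuous fun q : X₁ × ProbabilityMeasure X₂ ↦ C q.1 q.2)
    (hC_conv : ∀ x, IsConvexOnProb (C x)) {K : ℝ} (hK : ∀ x p, (K : EReal) ≤ C x p)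
    (hF₁ : F₁.Superlinear) (hF₂ : F₂.Superlinear) {μ₁ : Measure X₁} {μ₂ : Measure X₂}
    [IsFiniteMeasure μ₁] [IsFiniteMeasure μ₂] {a : ℝ} (ha : (a : EReal) < wOpt C F₁ F₂ μ₁ μ₂) :
    ∃ φ : X₂ →ᵇ ℝ, (a : EReal) ≤ eIntegral μ₁ (fun x ↦ F₁.circ (RCfun C φ x)) +
      eIntegral μ₂ fun y ↦ F₂.circ ((-(φ y) : ℝ) : EReal) := by
  obtain ⟨ψ₁, ψ₂, hψ, h_lt⟩ := exists_isLinearMinorant_of_lt_wOpt hC hC_conv hK hF₁ hF₂ ha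
  obtain ⟨ε, hε, hε_lt⟩ := exists_pos_mul_lt (sub_pos.2 h_lt) (μ₂.real univ)
  let v : X₂ →ᵇ ℝ := .const _ ε - ψ₂
  have h_bdd : BddAbove (range ψ₂) := ψ₂.isBounded_range.bddAbove
  have h_sup : ENNReal.ofReal (⨆ y, ψ₂ y) ≤ F₂.F 0 := by
    rw [ENNReal.ofReal_mono.map_ciSup_of_continuousAt ENNReal.continuous_ofReal.continuousAt h_bdd]
    exact iSup_le hψ.ofReal_snd_le
  obtain ⟨m₀, hm₀⟩ := hF₂.exists_conj_lt h_sup hε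
  obtain ⟨φ, σ, B, hσ, hσB, hφv, hφ⟩ :=
    hF₂.exists_boundedContinuous_supergradient v hm₀ fun y ↦ sub_le_sub_left (le_ciSup h_bdd y) ε
  have h_first : ((∫ x, ψ₁ x ∂μ₁ : ℝ) : EReal) ≤
      eIntegral μ₁ fun x ↦ F₁.circ (RCfun C φ x) := by
    rw [← eIntegral_coe (ψ₁.integrable μ₁)]
    exact eIntegral_mono_ae (.of_forall
      (hψ.coe_le_circ_RCfun hK hσ hσB hφ fun y ↦ by simp [v, hε.le]))
  have h_second : ((∫ y, -v y ∂μ₂ : ℝ) : EReal) ≤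
      eIntegral μ₂ fun y ↦ F₂.circ ((-(φ y) : ℝ) : EReal) := by
    have h_int : Integrable (fun y ↦ -v y) μ₂ := (v.integrable μ₂).neg
    rw [← eIntegral_coe h_int]
    exact eIntegral_mono_ae (.of_forall fun y ↦ hF₂.neg_le_circ (hφv y))
  refine ⟨φ, le_trans ?_ (add_le_add h_first h_second)⟩
  have h_v : ∫ y, -v y ∂μ₂ = ∫ y, ψ₂ y ∂μ₂ - μ₂.real univ * ε := by
    rw [← smul_eq_mul, ← integral_const, ← integral_sub (ψ₂.integrable _) (integrable_const _)]
    simp [v]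
  rw [← EReal.coe_add, EReal.coe_le_coe_iff, h_v]
  linarith

end StrongDuality

theorem stmt15_general {X₁ X₂ : Type*} [TopologicalSpace X₁] [PolishSpace X₁] [MeasurableSpace X₁]
    [BorelSpace X₁] [TopologicalSpace X₂] [PolishSpace X₂] [MeasurableSpace X₂] [BorelSpace X₂]
    [Nonempty X₂] {C : X₁ → ProbabilityMeasure X₂ → EReal}
    (hC : LowerSemicontinuous fun q : X₁ × ProbabilityMeasure X₂ ↦ C q.1 q.2)
    (hC_bdd : ∃ K : ℝ, ∀ x p, (K : EReal) ≤ C x p) (hC_conv : ∀ x, IsConvexOnProb (C x))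
    {F₁ F₂ : EntropyFn} (hF₁ : F₁.Superlinear) (hF₂ : F₂.Superlinear)
    (μ₁ : Measure X₁) (μ₂ : Measure X₂) [IsFiniteMeasure μ₁] [IsFiniteMeasure μ₂] :
    wOpt C F₁ F₂ μ₁ μ₂ = sSup {e : EReal | ∃ φ : X₂ →ᵇ ℝ,
      e = eIntegral μ₁ (fun x ↦ F₁.circ (RCfun C φ x)) +
        eIntegral μ₂ fun y ↦ F₂.circ ((-(φ y) : ℝ) : EReal)} := by
  obtain ⟨K, hK⟩ := hC_bdd
  apply le_antisymm
  · refine EReal.ge_of_forall_gt_iff_ge.1 fun a ha ↦ ?_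
    obtain ⟨φ, hφ⟩ := exists_coe_le_eIntegral_circ_add hC hC_conv hK hF₁ hF₂ ha
    exact hφ.trans (le_sSup ⟨φ, rfl⟩)
  · refine sSup_le ?_
    rintro _ ⟨φ, rfl⟩
    refine le_sInf ?_
    rintro _ ⟨γ, hγ, rfl⟩
    exact eIntegral_circ_add_eIntegral_circ_le_wCost hC.measurable hK hF₁ hF₂ μ₁ μ₂ γ hγ φ

theorem stmt15
    {X₁ : Type*} [MetricSpace X₁] [PolishSpace X₁] [MeasurableSpace X₁] [BorelSpace X₁]
    [LocallyCompactSpace X₁]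
    {X₂ : Type*} [MetricSpace X₂] [PolishSpace X₂] [MeasurableSpace X₂] [BorelSpace X₂]
    [LocallyCompactSpace X₂] [Nonempty X₂]
    (C : X₁ → ProbabilityMeasure X₂ → EReal)
    (hClsc : LowerSemicontinuous fun q : X₁ × ProbabilityMeasure X₂ => C q.1 q.2)
    (hCbdd : ∃ K : ℝ, ∀ x p, (K : EReal) ≤ C x p)
    (hCconv : ∀ (x : X₁) (p q m : ProbabilityMeasure X₂) (t : ℝ), 0 ≤ t → t ≤ 1 →
      (m : Measure X₂) = ENNReal.ofReal t • (p : Measure X₂)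
          + ENNReal.ofReal (1 - t) • (q : Measure X₂) →
      C x m ≤ (t : EReal) * C x p + ((1 - t : ℝ) : EReal) * C x q)
    (F₁ F₂ : EntropyFn) (hF₁ : F₁.Superlinear) (hF₂ : F₂.Superlinear) (hBM : HasBM X₂ F₂)
    (μ₁ : Measure X₁) (μ₂ : Measure X₂) [IsFiniteMeasure μ₁] [IsFiniteMeasure μ₂] :
    wOpt C F₁ F₂ μ₁ μ₂
      = sSup { e : EReal | ∃ φ : X₂ →ᵇ ℝ,
          e = eIntegral μ₁ (fun x₁ => F₁.circ (RCfun C φ x₁)) +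
              eIntegral μ₂ (fun x₂ => F₂.circ (((-(φ x₂) : ℝ) : EReal))) } := by
  exact stmt15_general hClsc hCbdd hCconv hF₁ hF₂ μ₁ μ₂
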